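/- arXiv:2502.15116 — 2 statements merged into one kernel-verified Lean document; each statement's English description precedes it below -/
import Mathlib

section
/- There is an absolute constant c₁ > 0 such that for every d ∈ ℕ, every nonempty finite set T ⊂ ℝ^d, and G a standard gaussian random vector in ℝ^d (i.e., with independent standard normal coordinates), c₁ · γ₂(T) ≤ E sup_{t∈T} ⟨G,t⟩, where γ₂(T) is the generic chaining functional of T with respect to the Euclidean metric. (Talagrand's majorizing measures theorem.) -/
/-!
The proof has a gaussian part and a metric part.

Gaussian part. For `F(A) = E sup_{t ∈ A} ⟨G, t⟩` the growth condition (`supF_growth`) holds: if the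
sets `H i ⊆ V`, indexed by the `2^k` vertices of the cube `{±1}^k`, lie in balls of radius at most
`a / 8` around `a`-separated centres `u i`, then `F(V) ≥ min F(H i) + c a √k`. To see this, move the
point `t ∈ H i` along `θ ↦ (t - θ² u i, θ b ε i)` in `ℝ^d × ℝ^k`, where `ε i` is the vertex `i` and
`b = a / (2√k)`. All mutual distances decrease on `[0, 1/2]`, hence so does the expected supremum
(a Slepian–Fernique comparison, `esup_path_le`, proved by differentiating `E log ∑ exp` and
integrating by parts, `hasDerivAt_integral_lse`). At `θ = 1/2` the cube coordinates are independent
of the others, and choosing the vertex aligned with their signs gains `b/2 · E ∑ |g_l|`, which is a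
multiple of `a √k`. Using cube vertices avoids estimating the maximum of independent normals.

Metric part (`GrowthSpace`), an interpolation and contraction argument in the spirit of van Handel.
For each point `x` and level `n` let `s n x` minimize `s ↦ (c/8) 2^{n/2} s - F(B(x, s))`. The minimal
values telescope in `n`, so that `∑ 2^{n/2} s n x ≲ F(univ)` (`exists_scales`). By the growth
condition, a piece of diameter `δ` on which `s n ≤ σ` cannot contain `2^(2^n)` points with mutual
distances more than `(δ + σ)/8 + 8σ` (`not_separated`), so it splits into `2^(2^n)` cells of
diameter about `δ/4 + O(σ)`. Applying this to all cells of a chain of partitions produces another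
chain, shifted by two levels, whose value is half of the old one plus `O(F(univ))`
(`contraction`). Iteration gives chains of value `O(F(univ))` (`chains`), and picking a point from
each cell gives an admissible sequence (`gammaTwo_le_of_chains`).
-/

open MeasureTheory ProbabilityTheory

/-- The standard gaussian measure on `ℝ^d` (independent standard normal coordinates). -/
noncomputable def stdGaussian (d : ℕ) : Measure (Fin d → ℝ) :=
  Measure.pi fun _ : Fin d => gaussianReal 0 1

/-- The Euclidean distance on `ℝ^d`. -/
noncomputable def eucDist {d : ℕ} (x y : Fin d → ℝ) : ℝ :=
  Real.sqrt (∑ i, (x i - y i) ^ 2)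

/-- An admissible sequence of a set `T`: subsets `Ts s ⊆ T` with `|Ts 0| = 1` and
`|Ts s| ≤ 2^(2^s)`, each nonempty and finite. -/
def Admissible {α : Type*} (T : Set α) (Ts : ℕ → Set α) : Prop :=
  (Ts 0).ncard = 1 ∧ ∀ s, Ts s ⊆ T ∧ (Ts s).Nonempty ∧ (Ts s).Finite ∧ (Ts s).ncard ≤ 2 ^ (2 ^ s)

/-- Talagrand's generic chaining functional `γ₂(T)` of `T ⊆ ℝ^d` with respect to the Euclidean
metric: the infimum over admissible sequences of `sup_{t∈T} Σ_s 2^{s/2} · dist₂(t, Ts s)`. -/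
noncomputable def gammaTwo {d : ℕ} (T : Set (Fin d → ℝ)) : ℝ :=
  sInf {g : ℝ | ∃ Ts : ℕ → Set (Fin d → ℝ), Admissible T Ts ∧
    ∀ t ∈ T, ∃ a : ℝ,
      HasSum (fun s : ℕ => 2 ^ ((s : ℝ) / 2) * sInf (eucDist t '' Ts s)) a ∧ a ≤ g}

/-! ### Gaussian integration by parts -/

lemma integrable_id_gauss : Integrable (fun x : ℝ => x) (gaussianReal 0 1) :=
  (memLp_id_gaussianReal (μ := 0) (v := 1) 1).integrable (by simp)

lemma integrable_of_bounded {Ω : Type*} [MeasurableSpace Ω] {μ : Measure Ω} [IsFiniteMeasure μ]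
    {h : Ω → ℝ} {C : ℝ} (hm : Measurable h) (hC : ∀ w, |h w| ≤ C) : Integrable h μ :=
  Integrable.of_bound hm.aestronglyMeasurable C (Filter.Eventually.of_forall hC)

lemma integrable_mul_of_bounded {Ω : Type*} [MeasurableSpace Ω] {μ : Measure Ω}
    {f h : Ω → ℝ} {C : ℝ} (hf : Integrable f μ) (hm : Measurable h) (hC : ∀ w, |h w| ≤ C) :
    Integrable (fun w => f w * h w) μ :=
  Integrable.mul_bdd (c := C) hf hm.aestronglyMeasurable (Filter.Eventually.of_forall hC)

lemma integrable_gauss_iff {f : ℝ → ℝ} (hf : Integrable f (gaussianReal 0 1)) :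
    Integrable (fun x => gaussianPDFReal 0 1 x * f x) := by
  rw [gaussianReal_of_var_ne_zero 0 one_ne_zero,
    integrable_withDensity_iff_integrable_smul' (measurable_gaussianPDF 0 1)
      (Filter.Eventually.of_forall fun x => gaussianPDF_lt_top)] at hf
  simpa [toReal_gaussianPDF] using hf

lemma hasDerivAt_gaussPDF (x : ℝ) :
    HasDerivAt (gaussianPDFReal 0 1) (-(x * gaussianPDFReal 0 1 x)) x := by
  have h1 : HasDerivAt (fun y : ℝ => -(y - 0) ^ 2 / (2 * ((1 : NNReal) : ℝ))) (-x) x := by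
    have := (((hasDerivAt_id x).sub_const 0).pow 2).neg.div_const (2 * ((1 : NNReal) : ℝ))
    refine this.congr_deriv ?_
    simp
    ring
  have h2 := (h1.exp).const_mul (Real.sqrt (2 * Real.pi * ((1 : NNReal) : ℝ)))⁻¹
  rw [gaussianPDFReal_def]
  refine h2.congr_deriv ?_
  ring

/-- Stein's identity in dimension one. -/
lemma stein_one {h h' : ℝ → ℝ} {C : ℝ} (hd : ∀ x, HasDerivAt h (h' x) x)
    (hb : ∀ x, |h x| ≤ C) (hb' : ∀ x, |h' x| ≤ C) :
    ∫ x, x * h x ∂(gaussianReal 0 1) = ∫ x, h' x ∂(gaussianReal 0 1) := by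
  have hm : Measurable h :=
    (continuous_iff_continuousAt.2 fun x => (hd x).continuousAt).measurable
  have hm' : Measurable h' := by
    have : h' = deriv h := funext fun x => (hd x).deriv.symm
    rw [this]
    exact measurable_deriv h
  have i1 : Integrable (fun x => x * h x) (gaussianReal 0 1) :=
    integrable_mul_of_bounded integrable_id_gauss hm hb
  have i2 : Integrable h' (gaussianReal 0 1) := integrable_of_bounded hm' hb'
  have i3 : Integrable h (gaussianReal 0 1) := integrable_of_bounded hm hb
  have key := integral_eq_zero_of_hasDerivAt_of_integrable
    (f := fun x => gaussianPDFReal 0 1 x * h x)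
    (f' := fun x => gaussianPDFReal 0 1 x * (h' x - x * h x))
    (fun x => ((hasDerivAt_gaussPDF x).mul (hd x)).congr_deriv (by ring))
    (integrable_gauss_iff (i2.sub i1)) (integrable_gauss_iff i3)
  have e := integral_gaussianReal_eq_integral_smul (μ := 0) (v := 1)
    (f := fun x => h' x - x * h x) one_ne_zero
  simp only [smul_eq_mul] at e
  rw [key, integral_sub i2 i1] at e
  linarith

/-- The standard gaussian measure on `ℝ^κ` for an arbitrary finite index type `κ`. -/
noncomputable abbrev gaussPi (κ : Type*) [Fintype κ] : Measure (κ → ℝ) :=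
  Measure.pi fun _ : κ => gaussianReal 0 1

/-- Replacing one coordinate by an independent copy preserves the gaussian measure. -/
lemma measurePreserving_resample {κ : Type*} [Fintype κ] [DecidableEq κ] (k : κ) :
    MeasurePreserving (fun p : (κ → ℝ) × ℝ => Function.update p.1 k p.2)
      ((gaussPi κ).prod (gaussianReal 0 1)) (gaussPi κ) := by
  have hmeas : Measurable (fun p : (κ → ℝ) × ℝ => Function.update p.1 k p.2) := by
    refine measurable_pi_lambda _ fun j => ?_
    by_cases hj : j = k
    · subst hj; simpa using measurable_snd
    · simp only [Function.update_of_ne hj]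
      exact (measurable_pi_apply j).comp measurable_fst
  refine ⟨hmeas, ?_⟩
  refine (Measure.pi_eq fun s hs => ?_).symm
  rw [Measure.map_apply hmeas (MeasurableSet.univ_pi hs)]
  have : (fun p : (κ → ℝ) × ℝ => Function.update p.1 k p.2) ⁻¹' (Set.univ.pi s)
      = (Set.univ.pi (Function.update s k Set.univ)) ×ˢ (s k) := by
    ext ⟨w, u⟩
    simp only [Set.mem_preimage, Set.mem_pi, Set.mem_univ, true_imp_iff, Set.mem_prod]
    constructor
    · intro h
      refine ⟨fun j => ?_, by simpa using h k⟩
      by_cases hj : j = k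
      · subst hj; simp
      · simpa [Function.update_of_ne hj] using h j
    · rintro ⟨h1, h2⟩ j
      by_cases hj : j = k
      · subst hj; simpa using h2
      · simpa [Function.update_of_ne hj] using h1 j
  rw [this, Measure.prod_prod, Measure.pi_pi,
    ← Finset.mul_prod_erase Finset.univ _ (Finset.mem_univ k),
    ← Finset.mul_prod_erase Finset.univ (fun i => gaussianReal 0 1 (s i)) (Finset.mem_univ k)]
  rw [Finset.prod_congr rfl (g := fun i => gaussianReal 0 1 (s i))]
  · simp [mul_comm]
  · intro j hj
    rw [Function.update_of_ne (Finset.ne_of_mem_erase hj)]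

lemma integrable_coord {κ : Type*} [Fintype κ] (k : κ) :
    Integrable (fun w : κ → ℝ => w k) (gaussPi κ) :=
  integrable_comp_eval (μ := fun _ : κ => gaussianReal 0 1) (i := k) integrable_id_gauss

/-- Gaussian integration by parts in the coordinate `k`. -/
lemma stein_pi {κ : Type*} [Fintype κ] [DecidableEq κ] (k : κ) {h h' : (κ → ℝ) → ℝ} {C : ℝ}
    (hm : Measurable h) (hm' : Measurable h')
    (hd : ∀ w u, HasDerivAt (fun u => h (Function.update w k u)) (h' (Function.update w k u)) u)
    (hb : ∀ x, |h x| ≤ C) (hb' : ∀ x, |h' x| ≤ C) :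
    ∫ w, w k * h w ∂(gaussPi κ) = ∫ w, h' w ∂(gaussPi κ) := by
  have mp := measurePreserving_resample k
  have i1 : Integrable (fun w : κ → ℝ => w k * h w) (gaussPi κ) :=
    integrable_mul_of_bounded (integrable_coord k) hm hb
  have i2 : Integrable h' (gaussPi κ) := integrable_of_bounded hm' hb'
  have e1 : ∫ w, w k * h w ∂(gaussPi κ) = ∫ p, (fun w : κ → ℝ => w k * h w)
      (Function.update p.1 k p.2) ∂((gaussPi κ).prod (gaussianReal 0 1)) := by
    conv_lhs => rw [← mp.map_eq]
    exact integral_map mp.measurable.aemeasurable (by rw [mp.map_eq]; exact i1.aestronglyMeasurable)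
  have e2 : ∫ w, h' w ∂(gaussPi κ) = ∫ p, h'
      (Function.update p.1 k p.2) ∂((gaussPi κ).prod (gaussianReal 0 1)) := by
    conv_lhs => rw [← mp.map_eq]
    exact integral_map mp.measurable.aemeasurable (by rw [mp.map_eq]; exact i2.aestronglyMeasurable)
  rw [e1, e2, integral_prod, integral_prod]
  · refine integral_congr_ae (Filter.Eventually.of_forall fun w => ?_)
    simp only [Function.update_self]
    exact stein_one (hd w) (fun x => hb _) (fun x => hb' _)
  · exact mp.integrable_comp_of_integrable i2
  · exact mp.integrable_comp_of_integrable i1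

/-! ### Monotonicity of gaussian log-sum-exp along contracting paths -/

/-- The smooth maximum `log ∑ exp xₜ`. -/
noncomputable def lse {ι : Type*} [Fintype ι] (x : ι → ℝ) : ℝ := Real.log (∑ t, Real.exp (x t))

/-- The softmax weights, i.e. the partial derivatives of `lse`. -/
noncomputable def softmax {ι : Type*} [Fintype ι] (x : ι → ℝ) (t : ι) : ℝ :=
  Real.exp (x t) / ∑ s, Real.exp (x s)

section lse

variable {ι : Type*} [Fintype ι] [Nonempty ι]

lemma sum_exp_pos (x : ι → ℝ) : 0 < ∑ t, Real.exp (x t) :=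
  Finset.sum_pos (fun _ _ => Real.exp_pos _) Finset.univ_nonempty

lemma softmax_nonneg (x : ι → ℝ) (t : ι) : 0 ≤ softmax x t :=
  div_nonneg (Real.exp_pos _).le (sum_exp_pos x).le

lemma softmax_sum (x : ι → ℝ) : ∑ t, softmax x t = 1 := by
  simp only [softmax]
  rw [← Finset.sum_div, div_self (sum_exp_pos x).ne']

lemma softmax_le_one (x : ι → ℝ) (t : ι) : softmax x t ≤ 1 := by
  rw [← softmax_sum x]
  exact Finset.single_le_sum (fun s _ => softmax_nonneg x s) (Finset.mem_univ t)

lemma abs_softmax_le_one (x : ι → ℝ) (t : ι) : |softmax x t| ≤ 1 := by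
  rw [abs_of_nonneg (softmax_nonneg x t)]
  exact softmax_le_one x t

lemma le_lse (x : ι → ℝ) (t : ι) : x t ≤ lse x := by
  rw [lse, Real.le_log_iff_exp_le (sum_exp_pos x)]
  exact Finset.single_le_sum (f := fun s => Real.exp (x s)) (fun s _ => (Real.exp_pos _).le)
    (Finset.mem_univ t)

lemma lse_le (x : ι → ℝ) (M : ℝ) (hM : ∀ t, x t ≤ M) : lse x ≤ M + Real.log (Fintype.card ι) := by
  have hc : (0 : ℝ) < Fintype.card ι := by exact_mod_cast Fintype.card_pos
  rw [lse, Real.log_le_iff_le_exp (sum_exp_pos x), Real.exp_add, Real.exp_log hc]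
  calc ∑ t, Real.exp (x t) ≤ ∑ _t : ι, Real.exp M :=
        Finset.sum_le_sum fun t _ => Real.exp_le_exp.2 (hM t)
    _ = Real.exp M * Fintype.card ι := by simp [mul_comm]

lemma abs_lse_le (x : ι → ℝ) : |lse x| ≤ ∑ t, |x t| + Real.log (Fintype.card ι) := by
  have hlog : 0 ≤ Real.log (Fintype.card ι) := Real.log_natCast_nonneg _
  have h1 : ∀ t, |x t| ≤ ∑ s, |x s| := fun t =>
    Finset.single_le_sum (f := fun s => |x s|) (fun s _ => abs_nonneg _) (Finset.mem_univ t)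
  refine abs_le.2 ⟨?_, lse_le x _ fun t => (le_abs_self _).trans (h1 t)⟩
  obtain ⟨t⟩ := ‹Nonempty ι›
  have := le_lse x t
  have := neg_abs_le (x t)
  have := h1 t
  linarith

lemma hasDerivAt_lse {x : ℝ → ι → ℝ} {x' : ι → ℝ} {θ : ℝ}
    (h : ∀ t, HasDerivAt (fun u => x u t) (x' t) θ) :
    HasDerivAt (fun u => lse (x u)) (∑ t, softmax (x θ) t * x' t) θ := by
  have := (HasDerivAt.fun_sum (u := Finset.univ) fun t _ => (h t).exp).log (sum_exp_pos _).ne'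
  refine this.congr_deriv ?_
  rw [Finset.sum_div]
  refine Finset.sum_congr rfl fun t _ => ?_
  rw [softmax]; ring

lemma hasDerivAt_softmax {x : ℝ → ι → ℝ} {x' : ι → ℝ} {θ : ℝ}
    (h : ∀ t, HasDerivAt (fun u => x u t) (x' t) θ) (t : ι) :
    HasDerivAt (fun u => softmax (x u) t)
      (softmax (x θ) t * (x' t - ∑ s, softmax (x θ) s * x' s)) θ := by
  have := (h t).exp.div (HasDerivAt.fun_sum (u := Finset.univ) fun t _ => (h t).exp)
    (sum_exp_pos _).ne'
  refine this.congr_deriv ?_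
  have e : ∑ s, softmax (x θ) s * x' s
      = (∑ s, Real.exp (x θ s) * x' s) / ∑ s, Real.exp (x θ s) := by
    rw [Finset.sum_div]
    refine Finset.sum_congr rfl fun t _ => ?_
    rw [softmax]; ring
  have hp := (sum_exp_pos (x θ)).ne'
  rw [e, softmax]
  field_simp

end lse

lemma measurable_softmax {ι : Type*} [Fintype ι] (t : ι) : Measurable fun x : ι → ℝ => softmax x t := by
  unfold softmax; fun_prop

lemma measurable_lse {ι : Type*} [Fintype ι] : Measurable fun x : ι → ℝ => lse x := by
  unfold lse; fun_prop

/-- The covariance of two functions under a probability vector, written with an independent copy. -/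
lemma cov_symm {ι : Type*} [Fintype ι] (p a b : ι → ℝ) (hp : ∑ t, p t = 1) :
    ∑ t, a t * (p t * (b t - ∑ s, p s * b s))
      = (1 / 2) * ∑ s, ∑ t, p s * p t * ((a t - a s) * (b t - b s)) := by
  have e : ∀ s t, p s * p t * ((a t - a s) * (b t - b s))
      = p s * (p t * (a t * b t)) + (p s * (a s * b s)) * p t
        - (p s * b s) * (p t * a t) - (p s * a s) * (p t * b t) := fun s t => by ring
  simp only [e, Finset.sum_sub_distrib, Finset.sum_add_distrib, ← Finset.mul_sum, ← Finset.sum_mul,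
    hp]
  have e2 : ∑ t, a t * (p t * (b t - ∑ s, p s * b s))
      = ∑ t, p t * (a t * b t) - (∑ t, p t * a t) * ∑ s, p s * b s := by
    rw [Finset.sum_mul, ← Finset.sum_sub_distrib]
    exact Finset.sum_congr rfl fun t _ => by ring
  rw [e2]; ring

lemma integrable_linear {κ : Type*} [Fintype κ] (v : κ → ℝ) :
    Integrable (fun w : κ → ℝ => ∑ k, w k * v k) (gaussPi κ) :=
  integrable_finsetSum _ fun k _ => (integrable_coord k).mul_const _

lemma integrable_lse {κ ι : Type*} [Fintype κ] [Fintype ι] [Nonempty ι] (v : ι → κ → ℝ) :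
    Integrable (fun w : κ → ℝ => lse fun t => ∑ k, w k * v t k) (gaussPi κ) := by
  have hi : Integrable (fun w : κ → ℝ => ∑ t, |∑ k, w k * v t k| + Real.log (Fintype.card ι))
      (gaussPi κ) :=
    (integrable_finsetSum _ fun t _ => (integrable_linear (v t)).abs).add (integrable_const _)
  refine hi.mono' ?_ (Filter.Eventually.of_forall fun w => abs_lse_le _)
  exact (measurable_lse.comp (by fun_prop)).aestronglyMeasurable

/-- Derivative of `E lse` along a path of gaussian vectors. After integration by parts only the
inner products of the increments of the path with those of its velocity remain. -/
lemma hasDerivAt_integral_lse {κ ι : Type*} [Fintype κ] [DecidableEq κ] [Fintype ι] [Nonempty ι]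
    {z z' : ℝ → ι → κ → ℝ} {C : ℝ}
    (hz : ∀ θ ∈ Set.Ioo (-1 : ℝ) 1, ∀ t k, HasDerivAt (fun u => z u t k) (z' θ t k) θ)
    (hC : ∀ θ ∈ Set.Ioo (-1 : ℝ) 1, ∀ t k, |z' θ t k| ≤ C) {θ : ℝ} (hθ : θ ∈ Set.Ioo (-1 : ℝ) 1) :
    HasDerivAt (fun u => ∫ w, lse (fun t => ∑ k, w k * z u t k) ∂(gaussPi κ))
      (∫ w, (1 / 2) * ∑ s, ∑ t, softmax (fun t => ∑ k, w k * z θ t k) s *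
        softmax (fun t => ∑ k, w k * z θ t k) t *
          ∑ k, (z' θ t k - z' θ s k) * (z θ t k - z θ s k) ∂(gaussPi κ)) θ := by
  have hFm : Measurable fun w : κ → ℝ =>
      ∑ t, softmax (fun t => ∑ k, w k * z θ t k) t * ∑ k, w k * z' θ t k := by
    refine Finset.measurable_fun_sum _ fun t _ => Measurable.mul ?_ (by fun_prop)
    exact (measurable_softmax t).comp (g := fun x : ι → ℝ => softmax x t)
      (f := fun (w : κ → ℝ) t => ∑ k, w k * z θ t k) (by fun_prop)
  have hD := (hasDerivAt_integral_of_dominated_loc_of_deriv_le (μ := gaussPi κ) (x₀ := θ)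
    (s := Set.Ioo (-1 : ℝ) 1)
    (F := fun u w => lse (fun t => ∑ k, w k * z u t k))
    (F' := fun u w => ∑ t, softmax (fun t => ∑ k, w k * z u t k) t * ∑ k, w k * z' u t k)
    (bound := fun w => ∑ _t : ι, ∑ k, |w k| * C)
    (isOpen_Ioo.mem_nhds hθ)
    (Filter.Eventually.of_forall fun u => (integrable_lse _).aestronglyMeasurable)
    (integrable_lse _)
    hFm.aestronglyMeasurable
    (Filter.Eventually.of_forall fun w u hu => by
      rw [Real.norm_eq_abs]
      refine (Finset.abs_sum_le_sum_abs _ _).trans (Finset.sum_le_sum fun t _ => ?_)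
      rw [abs_mul]
      calc _ ≤ 1 * |∑ k, w k * z' u t k| := by
            gcongr
            exact abs_softmax_le_one _ _
        _ = |∑ k, w k * z' u t k| := one_mul _
        _ ≤ ∑ k, |w k * z' u t k| := Finset.abs_sum_le_sum_abs _ _
        _ ≤ _ := Finset.sum_le_sum fun k _ => by
            rw [abs_mul]
            exact mul_le_mul_of_nonneg_left (hC u hu t k) (abs_nonneg _))
    (integrable_finsetSum _ fun _ _ => integrable_finsetSum _ fun k _ =>
      (integrable_coord k).abs.mul_const _)
    (Filter.Eventually.of_forall fun w u hu => hasDerivAt_lse fun t =>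
      HasDerivAt.fun_sum fun k _ => (hz u hu t k).const_mul (w k))).2
  refine hD.congr_deriv ?_
  -- `h k` collects the factor multiplying `w k` in the derivative
  set X : (κ → ℝ) → ι → ℝ := fun w t => ∑ k, w k * z θ t k with hX
  have hXm : Measurable X := by fun_prop
  set h : κ → (κ → ℝ) → ℝ := fun k w => ∑ t, z' θ t k * softmax (X w) t with hh
  set h' : κ → (κ → ℝ) → ℝ := fun k w =>
    ∑ t, z' θ t k * (softmax (X w) t * (z θ t k - ∑ s, softmax (X w) s * z θ s k)) with hh'
  have hm : ∀ k, Measurable (h k) := fun k => Finset.measurable_fun_sum _ fun t _ =>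
      ((measurable_softmax t).comp hXm).const_mul _
  have hm' : ∀ k, Measurable (h' k) := fun k => Finset.measurable_fun_sum _ fun t _ =>
    (((measurable_softmax t).comp hXm).mul ((measurable_const).sub
      (Finset.measurable_fun_sum _ fun s _ => ((measurable_softmax s).comp hXm).mul_const _))
      ).const_mul _
  have hb : ∀ k w, |h k w| ≤ ∑ t, |z' θ t k| := fun k w => by
    refine (Finset.abs_sum_le_sum_abs _ _).trans (Finset.sum_le_sum fun t _ => ?_)
    rw [abs_mul]
    exact mul_le_of_le_one_right (abs_nonneg _) (abs_softmax_le_one _ _)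
  have hb' : ∀ k w, |h' k w| ≤ ∑ t, |z' θ t k| * (|z θ t k| + ∑ s, |z θ s k|) := fun k w => by
    refine (Finset.abs_sum_le_sum_abs _ _).trans (Finset.sum_le_sum fun t _ => ?_)
    rw [abs_mul, abs_mul]
    refine mul_le_mul_of_nonneg_left ?_ (abs_nonneg _)
    refine (mul_le_of_le_one_left (abs_nonneg _) (abs_softmax_le_one _ _)).trans ?_
    refine (abs_sub _ _).trans (add_le_add_right ?_ _)
    refine (Finset.abs_sum_le_sum_abs _ _).trans (Finset.sum_le_sum fun s _ => ?_)
    rw [abs_mul]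
    exact mul_le_of_le_one_left (abs_nonneg _) (abs_softmax_le_one _ _)
  have hXd : ∀ k w u t, HasDerivAt (fun u => X (Function.update w k u) t) (z θ t k) u := by
    intro k w u t
    have : (fun u => X (Function.update w k u) t)
        = fun u => u * z θ t k + ∑ j ∈ Finset.univ.erase k, w j * z θ t j := by
      funext u
      simp only [hX]
      rw [← Finset.add_sum_erase _ _ (Finset.mem_univ k), Function.update_self]
      congr 1
      refine Finset.sum_congr rfl fun j hj => ?_
      rw [Function.update_of_ne (Finset.ne_of_mem_erase hj)]
    rw [this]
    simpa using ((hasDerivAt_id u).mul_const (z θ t k)).add_const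
      (∑ j ∈ Finset.univ.erase k, w j * z θ t j)
  have hstein : ∀ k, ∫ w, w k * h k w ∂(gaussPi κ) = ∫ w, h' k w ∂(gaussPi κ) := fun k =>
    stein_pi (C := max (∑ t, |z' θ t k|) (∑ t, |z' θ t k| * (|z θ t k| + ∑ s, |z θ s k|))) k
      (hm k) (hm' k)
      (fun w u => HasDerivAt.fun_sum fun t _ =>
        (hasDerivAt_softmax (x := fun u => X (Function.update w k u)) (hXd k w u) t).const_mul _)
      (fun w => (hb k w).trans (le_max_left _ _)) (fun w => (hb' k w).trans (le_max_right _ _))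
  calc ∫ w, ∑ t, softmax (X w) t * ∑ k, w k * z' θ t k ∂(gaussPi κ)
      = ∫ w, ∑ k, w k * h k w ∂(gaussPi κ) := by
        congr 1; funext w
        simp only [hh, Finset.mul_sum]
        rw [Finset.sum_comm]
        exact Finset.sum_congr rfl fun k _ => Finset.sum_congr rfl fun t _ => by ring
    _ = ∑ k, ∫ w, w k * h k w ∂(gaussPi κ) :=
        integral_finsetSum _ fun k _ => integrable_mul_of_bounded (integrable_coord k) (hm k) (hb k)
    _ = ∑ k, ∫ w, h' k w ∂(gaussPi κ) := Finset.sum_congr rfl fun k _ => hstein k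
    _ = ∫ w, ∑ k, h' k w ∂(gaussPi κ) :=
        (integral_finsetSum _ fun k _ => integrable_of_bounded (hm' k) (hb' k)).symm
    _ = _ := by
        congr 1; funext w
        simp only [hh', cov_symm _ _ _ (softmax_sum (X w)), ← Finset.mul_sum]
        congr 1
        rw [Finset.sum_comm]
        refine Finset.sum_congr rfl fun s _ => ?_
        rw [Finset.sum_comm]
        exact Finset.sum_congr rfl fun t _ => (Finset.mul_sum _ _ _).symm

/-- If all mutual distances shrink along a path of gaussian vectors on `[0, 1/2]`, then the expected
smooth maximum decreases. -/
lemma integral_lse_le {κ ι : Type*} [Fintype κ] [DecidableEq κ] [Fintype ι] [Nonempty ι]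
    {z z' : ℝ → ι → κ → ℝ} {C : ℝ}
    (hz : ∀ θ ∈ Set.Ioo (-1 : ℝ) 1, ∀ t k, HasDerivAt (fun u => z u t k) (z' θ t k) θ)
    (hC : ∀ θ ∈ Set.Ioo (-1 : ℝ) 1, ∀ t k, |z' θ t k| ≤ C)
    (hneg : ∀ θ ∈ Set.Icc (0 : ℝ) (1 / 2), ∀ s t,
      ∑ k, (z' θ t k - z' θ s k) * (z θ t k - z θ s k) ≤ 0) :
    ∫ w, lse (fun t => ∑ k, w k * z (1 / 2) t k) ∂(gaussPi κ)
      ≤ ∫ w, lse (fun t => ∑ k, w k * z 0 t k) ∂(gaussPi κ) := by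
  have hsub : ∀ θ ∈ Set.Icc (0 : ℝ) (1 / 2), θ ∈ Set.Ioo (-1 : ℝ) 1 := fun θ h =>
    ⟨by linarith [h.1], by linarith [h.2]⟩
  have hd := fun θ h => hasDerivAt_integral_lse hz hC (hsub θ h)
  have := antitoneOn_of_deriv_nonpos (convex_Icc (0 : ℝ) (1 / 2))
    (f := fun u => ∫ w, lse (fun t => ∑ k, w k * z u t k) ∂(gaussPi κ))
    (fun θ h => (hd θ h).continuousAt.continuousWithinAt)
    (fun θ h => (hd θ (interior_subset h)).differentiableAt.differentiableWithinAt)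
    (fun θ h => by
      rw [(hd θ (interior_subset h)).deriv]
      refine integral_nonpos fun w => ?_
      refine mul_nonpos_of_nonneg_of_nonpos (by norm_num) ?_
      refine Finset.sum_nonpos fun s _ => Finset.sum_nonpos fun t _ => ?_
      exact mul_nonpos_of_nonneg_of_nonpos
        (mul_nonneg (softmax_nonneg _ _) (softmax_nonneg _ _)) (hneg θ (interior_subset h) s t))
  exact this ⟨le_rfl, by norm_num⟩ ⟨by norm_num, le_rfl⟩ (by norm_num)

/-! ### Comparison of suprema and the growth condition -/

/-- The expected supremum `E sup_t ⟨W, v_t⟩` of a finite family of vectors. -/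
noncomputable def esup {κ ι : Type*} [Fintype κ] (v : ι → κ → ℝ) : ℝ :=
  ∫ w, ⨆ t, ∑ k, w k * v t k ∂(gaussPi κ)

lemma abs_iSup_le_sum {ι : Type*} [Fintype ι] [Nonempty ι] (x : ι → ℝ) :
    |⨆ t, x t| ≤ ∑ t, |x t| := by
  obtain ⟨t, ht⟩ := exists_eq_ciSup_of_finite (f := x)
  rw [← ht]
  exact Finset.single_le_sum (f := fun s => |x s|) (fun s _ => abs_nonneg _) (Finset.mem_univ t)

lemma integrable_iSup {Ω ι : Type*} [MeasurableSpace Ω] {μ : Measure Ω} [Fintype ι] [Nonempty ι]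
    {f : ι → Ω → ℝ} (hm : ∀ t, Measurable (f t)) (hf : ∀ t, Integrable (f t) μ) :
    Integrable (fun w => ⨆ t, f t w) μ :=
  Integrable.mono' (integrable_finsetSum Finset.univ fun t _ => (hf t).abs)
    (Measurable.iSup hm).aestronglyMeasurable
    (Filter.Eventually.of_forall fun _ => abs_iSup_le_sum _)

lemma integrable_esup {κ ι : Type*} [Fintype κ] [Fintype ι] [Nonempty ι] (v : ι → κ → ℝ) :
    Integrable (fun w : κ → ℝ => ⨆ t, ∑ k, w k * v t k) (gaussPi κ) :=
  integrable_iSup (fun t => by fun_prop) fun t => integrable_linear (v t)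

/-- Comparison of expected suprema: apply the smooth comparison to the path scaled by `β`, and let
`β → ∞`. -/
lemma esup_path_le {κ ι : Type*} [Fintype κ] [DecidableEq κ] [Fintype ι] [Nonempty ι]
    {z z' : ℝ → ι → κ → ℝ} {C : ℝ}
    (hz : ∀ θ ∈ Set.Ioo (-1 : ℝ) 1, ∀ t k, HasDerivAt (fun u => z u t k) (z' θ t k) θ)
    (hC : ∀ θ ∈ Set.Ioo (-1 : ℝ) 1, ∀ t k, |z' θ t k| ≤ C)
    (hneg : ∀ θ ∈ Set.Icc (0 : ℝ) (1 / 2), ∀ s t,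
      ∑ k, (z' θ t k - z' θ s k) * (z θ t k - z θ s k) ≤ 0) :
    esup (z (1 / 2)) ≤ esup (z 0) := by
  have hlog : 0 ≤ Real.log (Fintype.card ι) := Real.log_natCast_nonneg _
  have hscale : ∀ (β : ℝ) (v : ι → κ → ℝ) (w : κ → ℝ) (t : ι),
      ∑ k, w k * (β * v t k) = β * ∑ k, w k * v t k := fun β v w t => by
    rw [Finset.mul_sum]
    exact Finset.sum_congr rfl fun k _ => by ring
  have key : ∀ β : ℝ, 0 < β → β * esup (z (1 / 2)) ≤ β * esup (z 0) + Real.log (Fintype.card ι) := by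
    intro β hβ
    have h := integral_lse_le (z := fun θ t k => β * z θ t k) (z' := fun θ t k => β * z' θ t k)
      (C := β * C) (fun θ h t k => (hz θ h t k).const_mul β)
      (fun θ h t k => by
        rw [abs_mul, abs_of_pos hβ]
        exact mul_le_mul_of_nonneg_left (hC θ h t k) hβ.le)
      (fun θ h s t => by
        have e : ∑ k, (β * z' θ t k - β * z' θ s k) * (β * z θ t k - β * z θ s k)
            = β ^ 2 * ∑ k, (z' θ t k - z' θ s k) * (z θ t k - z θ s k) := by
          rw [Finset.mul_sum]
          exact Finset.sum_congr rfl fun k _ => by ring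
        rw [e]
        exact mul_nonpos_of_nonneg_of_nonpos (sq_nonneg _) (hneg θ h s t))
    have h1 : β * esup (z (1 / 2))
        ≤ ∫ w, lse (fun t => ∑ k, w k * (β * z (1 / 2) t k)) ∂(gaussPi κ) := by
      rw [esup, ← integral_const_mul]
      refine integral_mono ((integrable_esup _).const_mul β)
        (integrable_lse fun t k => β * z (1 / 2) t k) fun w => ?_
      obtain ⟨t, ht⟩ := exists_eq_ciSup_of_finite (f := fun t => ∑ k, w k * z (1 / 2) t k)
      simp only [← ht]
      rw [← hscale]
      exact le_lse (fun t => ∑ k, w k * (β * z (1 / 2) t k)) t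
    have h2 : ∫ w, lse (fun t => ∑ k, w k * (β * z 0 t k)) ∂(gaussPi κ)
        ≤ β * esup (z 0) + Real.log (Fintype.card ι) := by
      have e : β * esup (z 0) + Real.log (Fintype.card ι)
          = ∫ w, (β * (⨆ t, ∑ k, w k * z 0 t k) + Real.log (Fintype.card ι)) ∂(gaussPi κ) := by
        rw [integral_add ((integrable_esup _).const_mul β) (integrable_const _),
          integral_const_mul]
        simp [esup]
      rw [e]
      refine integral_mono (integrable_lse fun t k => β * z 0 t k)
        (((integrable_esup _).const_mul β).add (integrable_const _)) fun w => ?_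
      refine lse_le _ _ fun t => ?_
      rw [hscale]
      exact mul_le_mul_of_nonneg_left
        (le_ciSup (f := fun t => ∑ k, w k * z 0 t k) (Set.finite_range _).bddAbove t) hβ.le
    exact h1.trans (h.trans h2)
  by_contra! hlt
  set δ := esup (z (1 / 2)) - esup (z 0) with hδ
  have hδ0 : 0 < δ := sub_pos.2 hlt
  have := key ((Real.log (Fintype.card ι) + 1) / δ) (by positivity)
  have e : (Real.log (Fintype.card ι) + 1) / δ * δ = Real.log (Fintype.card ι) + 1 :=
    div_mul_cancel₀ _ hδ0.ne'
  rw [hδ, mul_sub, ← hδ] at e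
  linarith

lemma integral_sum_type {κ κ' : Type*} [Fintype κ] [Fintype κ'] (φ : (κ ⊕ κ' → ℝ) → ℝ) :
    ∫ w, φ w ∂(gaussPi (κ ⊕ κ'))
      = ∫ p, φ (Sum.elim p.1 p.2) ∂((gaussPi κ).prod (gaussPi κ')) := by
  have mp := measurePreserving_sumPiEquivProdPi_symm
    (fun _ : κ ⊕ κ' => (gaussianReal 0 1 : Measure ℝ))
  rw [← mp.integral_comp (MeasurableEquiv.measurableEmbedding _)]
  congr 1

/-- The first absolute moment of a standard normal variable. -/
noncomputable def absMoment : ℝ := ∫ x, |x| ∂(gaussianReal 0 1)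

lemma absMoment_pos : 0 < absMoment := by
  have h0 : 0 ≤ absMoment := integral_nonneg fun x => abs_nonneg x
  refine lt_of_le_of_ne h0 fun h => ?_
  have h1 := (integral_eq_zero_iff_of_nonneg (fun x => abs_nonneg x) integrable_id_gauss.abs).1 h.symm
  have h2 : ∀ᵐ x ∂(gaussianReal 0 1), x = 0 := by
    filter_upwards [h1] with x hx
    simpa using hx
  have h3 : gaussianReal 0 1 {x : ℝ | ¬ x = 0} = 0 := h2
  have h4 := gaussianReal_absolutelyContinuous' 0 (v := 1) one_ne_zero h3
  have h5 : (Set.Ioi (0 : ℝ)) ⊆ {x : ℝ | ¬ x = 0} := fun x hx => ne_of_gt hx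
  have h6 := measure_mono_null h5 h4
  simp at h6

/-- `F(A) = E sup_{t ∈ A} ⟨G, t⟩` for a finite set `A` in `ℝ^d`. -/
noncomputable def supF {d : ℕ} (A : Finset (Fin d → ℝ)) : ℝ :=
  esup (fun t : A => (t : Fin d → ℝ))

/-- The sign attached to a bit. -/
def bsgn (b : Bool) : ℝ := if b then 1 else -1

lemma abs_bsgn (b : Bool) : |bsgn b| = 1 := by cases b <;> simp [bsgn]

lemma bsgn_sub_sq (b c : Bool) : (bsgn b - bsgn c) ^ 2 ≤ 4 := by
  cases b <;> cases c <;> norm_num [bsgn]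

lemma integral_linear {d : ℕ} (v : Fin d → ℝ) :
    ∫ w, ∑ k, w k * v k ∂(gaussPi (Fin d)) = 0 := by
  rw [integral_finsetSum _ fun k _ => (integrable_coord k).mul_const _]
  refine Finset.sum_eq_zero fun k _ => ?_
  rw [integral_mul_const]
  have := integral_comp_eval (μ := fun _ : Fin d => gaussianReal 0 1) (i := k)
    (f := fun x : ℝ => x) measurable_id.aestronglyMeasurable
  rw [this, integral_id_gaussianReal, zero_mul]

/-- The distances shrink along the path `θ ↦ (t - θ² uᵢ, θ b εᵢ)`: here `U` is the difference of two
centres, `v` the difference of points attached to these centres and `e` the difference of the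
corresponding sign vectors. -/
lemma path_decreasing {d k : ℕ} (U v : Fin d → ℝ) (e : Fin k → ℝ) {a b σ θ : ℝ}
    (ha : 0 ≤ a) (hσ : 0 ≤ σ) (hσa : 8 * σ ≤ a)
    (hU : a ^ 2 ≤ ∑ l, U l ^ 2) (hv : ∑ l, (v l - U l) ^ 2 ≤ 4 * σ ^ 2)
    (he : ∀ l, e l ^ 2 ≤ 4) (hb : 4 * k * b ^ 2 ≤ a ^ 2) (hθ : θ ∈ Set.Icc (0 : ℝ) (1 / 2)) :
    ∑ l, (-(2 * θ * U l)) * (v l - θ ^ 2 * U l) + ∑ l, (b * e l) * (θ * b * e l) ≤ 0 := by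
  obtain ⟨h0, h1⟩ := hθ
  set Q := ∑ l, U l ^ 2 with hQ
  have hQ0 : 0 ≤ Q := Finset.sum_nonneg fun l _ => sq_nonneg _
  have cs := Finset.sum_mul_sq_le_sq_mul_sq Finset.univ U (fun l => v l - U l)
  have c2 : (∑ l, U l * (v l - U l)) ^ 2 ≤ (Q / 4) ^ 2 := by
    refine cs.trans ?_
    have : ∑ l, (v l - U l) ^ 2 ≤ Q / 16 := by nlinarith
    calc Q * ∑ l, (v l - U l) ^ 2 ≤ Q * (Q / 16) := mul_le_mul_of_nonneg_left this hQ0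
      _ = (Q / 4) ^ 2 := by ring
  have c3 := (abs_le.1 (abs_le_of_sq_le_sq c2 (by positivity))).1
  have e1 : ∑ l, (-(2 * θ * U l)) * (v l - θ ^ 2 * U l)
      = -(2 * θ) * (∑ l, U l * (v l - U l) + (1 - θ ^ 2) * Q) := by
    rw [hQ, Finset.mul_sum, ← Finset.sum_add_distrib, Finset.mul_sum]
    exact Finset.sum_congr rfl fun l _ => by ring
  have e2 : ∑ l, (b * e l) * (θ * b * e l) ≤ θ * (4 * k * b ^ 2) := by
    calc ∑ l, (b * e l) * (θ * b * e l) ≤ ∑ _l : Fin k, θ * b ^ 2 * 4 :=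
          Finset.sum_le_sum fun l _ => by
            have := mul_le_mul_of_nonneg_left (he l) (mul_nonneg h0 (sq_nonneg b))
            linarith
      _ = θ * (4 * k * b ^ 2) := by simp; ring
  have h2 : θ ^ 2 ≤ 1 / 4 := by nlinarith
  have h3 : Q / 2 ≤ ∑ l, U l * (v l - U l) + (1 - θ ^ 2) * Q := by nlinarith
  rw [e1]
  have h4 : θ * (Q / 2) ≤ θ * (∑ l, U l * (v l - U l) + (1 - θ ^ 2) * Q) :=
    mul_le_mul_of_nonneg_left h3 h0
  have h5 : θ * (4 * k * b ^ 2) ≤ θ * Q := mul_le_mul_of_nonneg_left (hb.trans hU) h0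
  linarith

lemma iSup_le_iSup_subset {d : ℕ} {ι : Type*} [Nonempty ι] (V : Finset (Fin d → ℝ)) (f : ι → Fin d → ℝ)
    (hf : ∀ i, f i ∈ V) (x : Fin d → ℝ) :
    ⨆ i, ∑ k, x k * f i k ≤ ⨆ t : V, ∑ k, x k * (t : Fin d → ℝ) k :=
  ciSup_le fun i => le_ciSup (f := fun t : V => ∑ k, x k * (t : Fin d → ℝ) k)
    (Set.finite_range _).bddAbove ⟨f i, hf i⟩

/-- The growth condition: if the sets `H i`, indexed by the vertices of a `k`-dimensional cube, lie
in `V` and in small balls around `a`-separated points, then `F(V)` exceeds `min F(H i)` by a multiple of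
`a √k`. The process is deformed into one with an independent gaussian linear functional on the cube
added; the vertex maximizing this functional is independent of the process on the `H i`. -/
lemma supF_growth {d k : ℕ} (hk : 0 < k) (u : (Fin k → Bool) → Fin d → ℝ)
    (H : (Fin k → Bool) → Finset (Fin d → ℝ)) (V : Finset (Fin d → ℝ)) {a σ m₀ : ℝ}
    (ha : 0 ≤ a) (hσ : 0 ≤ σ) (hσa : 8 * σ ≤ a)
    (hsep : ∀ i j, i ≠ j → a ^ 2 ≤ ∑ l, (u i l - u j l) ^ 2)
    (hne : ∀ i, (H i).Nonempty)
    (hball : ∀ i, ∀ t ∈ H i, ∑ l, (t l - u i l) ^ 2 ≤ σ ^ 2)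
    (hV : ∀ i, H i ⊆ V) (hm : ∀ i, m₀ ≤ supF (H i)) :
    m₀ + absMoment / 4 * a * Real.sqrt k ≤ supF V := by
  have hk' : (0 : ℝ) < k := by exact_mod_cast hk
  have hsk : 0 < Real.sqrt k := Real.sqrt_pos.2 hk'
  have hsk2 : Real.sqrt k ^ 2 = k := Real.sq_sqrt hk'.le
  set b : ℝ := a / (2 * Real.sqrt k) with hb
  have hb0 : 0 ≤ b := by positivity
  have hb4 : 4 * k * b ^ 2 = a ^ 2 := by
    rw [hb, div_pow, mul_pow, hsk2]
    field_simp
    ring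
  have hHne : ∀ i, Nonempty (H i) := fun i => (hne i).to_subtype
  have hι : Nonempty (Σ i : Fin k → Bool, H i) :=
    ⟨⟨fun _ => true, Classical.arbitrary _⟩⟩
  let z : ℝ → (Σ i : Fin k → Bool, H i) → (Fin d ⊕ Fin k) → ℝ := fun θ p =>
    Sum.elim (fun l => (p.2 : Fin d → ℝ) l - θ ^ 2 * u p.1 l) (fun l => θ * b * bsgn (p.1 l))
  let z' : ℝ → (Σ i : Fin k → Bool, H i) → (Fin d ⊕ Fin k) → ℝ := fun θ p =>
    Sum.elim (fun l => -(2 * θ * u p.1 l)) (fun l => b * bsgn (p.1 l))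
  have hcomp : esup (z (1 / 2)) ≤ esup (z 0) := by
    refine esup_path_le (z' := z') (C := ∑ i, ∑ l, 2 * |u i l| + b) ?_ ?_ ?_
    · rintro θ - p (l | l)
      · have := ((hasDerivAt_id θ).pow 2).mul_const (u p.1 l) |>.const_sub ((p.2 : Fin d → ℝ) l)
        refine this.congr_deriv ?_
        simp [z']
      · have := ((hasDerivAt_id θ).mul_const b).mul_const (bsgn (p.1 l))
        refine this.congr_deriv ?_
        simp [z']
    · rintro θ hθ p (l | l)
      · have h1 : ∑ l, 2 * |u p.1 l| ≤ ∑ i, ∑ l, 2 * |u i l| :=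
          Finset.single_le_sum (f := fun i => ∑ l, 2 * |u i l|)
            (fun i _ => Finset.sum_nonneg fun l _ => by positivity) (Finset.mem_univ p.1)
        have h2 : 2 * |u p.1 l| ≤ ∑ l, 2 * |u p.1 l| :=
          Finset.single_le_sum (f := fun l => 2 * |u p.1 l|)
            (fun l _ => by positivity) (Finset.mem_univ l)
        have h3 : |θ| ≤ 1 := abs_le.2 ⟨hθ.1.le, hθ.2.le⟩
        simp only [z', Sum.elim_inl, abs_neg, abs_mul, abs_two]
        nlinarith [abs_nonneg (u p.1 l), abs_nonneg θ]
      · have h1 : 0 ≤ ∑ i, ∑ l, 2 * |u i l| :=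
          Finset.sum_nonneg fun i _ => Finset.sum_nonneg fun l _ => by positivity
        simp only [z', Sum.elim_inr, abs_mul, abs_bsgn, abs_of_nonneg hb0]
        linarith
    · rintro θ hθ ⟨i, s⟩ ⟨j, t⟩
      rw [Fintype.sum_sum_type]
      simp only [z, z', Sum.elim_inl, Sum.elim_inr]
      by_cases hij : i = j
      · subst hij; simp
      · have := path_decreasing (fun l => u j l - u i l)
          (fun l => (t : Fin d → ℝ) l - (s : Fin d → ℝ) l)
          (fun l => bsgn (j l) - bsgn (i l)) (θ := θ) (b := b) ha hσ hσa (hsep j i (Ne.symm hij)) ?_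
          (fun l => bsgn_sub_sq _ _) hb4.le hθ
        · refine le_of_eq_of_le ?_ this
          congr 1
          · exact Finset.sum_congr rfl fun l _ => by ring
          · exact Finset.sum_congr rfl fun l _ => by ring
        · have h1 := hball i s s.2
          have h2 := hball j t t.2
          calc ∑ l, ((t : Fin d → ℝ) l - (s : Fin d → ℝ) l - (u j l - u i l)) ^ 2
              ≤ ∑ l, (2 * ((t : Fin d → ℝ) l - u j l) ^ 2 + 2 * ((s : Fin d → ℝ) l - u i l) ^ 2) :=
                Finset.sum_le_sum fun l _ => by
                  nlinarith [sq_nonneg (((t : Fin d → ℝ) l - u j l) + ((s : Fin d → ℝ) l - u i l))]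
            _ ≤ 4 * σ ^ 2 := by
                rw [Finset.sum_add_distrib, ← Finset.mul_sum, ← Finset.mul_sum]
                linarith
  -- at time `0` the process is the original one, indexed by the union of the `H i`
  have hV0 : V.Nonempty := (hne fun _ => true).mono (hV _)
  have : Nonempty V := hV0.to_subtype
  have hstart : esup (z 0) ≤ supF V := by
    have hVint := integrable_esup (fun t : V => (t : Fin d → ℝ))
    have e : supF V = ∫ p : (Fin d → ℝ) × (Fin k → ℝ), ⨆ t : V, ∑ l, p.1 l * (t : Fin d → ℝ) l
        ∂((gaussPi (Fin d)).prod (gaussPi (Fin k))) := by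
      rw [integral_fun_fst (f := fun x : Fin d → ℝ => ⨆ t : V, ∑ l, x l * (t : Fin d → ℝ) l)]
      simp [supF, esup]
    rw [e, esup, integral_sum_type]
    have hi := integrable_esup (z 0)
    have mp := measurePreserving_sumPiEquivProdPi_symm
      (fun _ : Fin d ⊕ Fin k => (gaussianReal 0 1 : Measure ℝ))
    refine integral_mono (mp.integrable_comp_of_integrable hi) (hVint.comp_fst _) fun p => ?_
    have := iSup_le_iSup_subset V (fun q : (Σ i : Fin k → Bool, H i) => (q.2 : Fin d → ℝ))
      (fun q => hV q.1 q.2.2) p.1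
    refine le_of_eq_of_le ?_ this
    congr 1; funext q
    simp [z, Fintype.sum_sum_type]
  have hend : m₀ + absMoment / 4 * a * Real.sqrt k ≤ esup (z (1 / 2)) := by
    have hi := integrable_esup (z (1 / 2))
    have mp := measurePreserving_sumPiEquivProdPi_symm
      (fun _ : Fin d ⊕ Fin k => (gaussianReal 0 1 : Measure ℝ))
    have hi2 : Integrable (fun p : (Fin d → ℝ) × (Fin k → ℝ) =>
        ⨆ t, ∑ l, (Sum.elim p.1 p.2 : Fin d ⊕ Fin k → ℝ) l * z (1 / 2) t l)
        ((gaussPi (Fin d)).prod (gaussPi (Fin k))) := mp.integrable_comp_of_integrable hi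
    rw [esup, integral_sum_type, integral_prod_symm _ hi2]
    have hg : Integrable (fun g : Fin k → ℝ => m₀ + b / 2 * ∑ l, |g l|) (gaussPi (Fin k)) :=
      (integrable_const _).add
        ((integrable_finsetSum _ fun l _ => (integrable_coord l).abs).const_mul _)
    have e : m₀ + absMoment / 4 * a * Real.sqrt k
        = ∫ g, (m₀ + b / 2 * ∑ l, |g l|) ∂(gaussPi (Fin k)) := by
      rw [integral_add (integrable_const _)
        ((integrable_finsetSum _ fun l _ => (integrable_coord l).abs).const_mul _),
        integral_const_mul, integral_finsetSum _ fun l _ => (integrable_coord l).abs]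
      have : ∀ l : Fin k, ∫ g : Fin k → ℝ, |g l| ∂(gaussPi (Fin k)) = absMoment := fun l =>
        integral_comp_eval (μ := fun _ : Fin k => gaussianReal 0 1) (i := l)
          (f := fun x : ℝ => |x|) measurable_id.abs.aestronglyMeasurable
      simp only [this]
      simp only [integral_const, probReal_univ, one_smul, Finset.sum_const, Finset.card_univ,
        Fintype.card_fin, nsmul_eq_mul]
      rw [hb]
      nth_rewrite 3 [← hsk2]
      field_simp
      ring
    rw [e]
    refine integral_mono_ae hg hi2.integral_prod_right ?_
    filter_upwards [hi2.prod_left_ae] with g hgi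
    -- the vertex of the cube aligned with the signs of `g`
    set i : Fin k → Bool := fun l => decide (0 ≤ g l) with hi_def
    have hsgn : ∀ l, g l * bsgn (i l) = |g l| := fun l => by
      by_cases h : 0 ≤ g l
      · simp [hi_def, bsgn, h, abs_of_nonneg h]
      · simp [hi_def, bsgn, h, abs_of_neg (not_le.1 h)]
    have hR₀ : Integrable (fun x : Fin d → ℝ => (⨆ t : H i, ∑ l, x l * (t : Fin d → ℝ) l)
        - ∑ l, x l * (1 / 4 * u i l)) (gaussPi (Fin d)) :=
      (integrable_esup fun t : H i => (t : Fin d → ℝ)).sub (integrable_linear _)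
    have hR : Integrable (fun x : Fin d → ℝ => (⨆ t : H i, ∑ l, x l * (t : Fin d → ℝ) l)
        - ∑ l, x l * (1 / 4 * u i l) + b / 2 * ∑ l, |g l|) (gaussPi (Fin d)) :=
      hR₀.add (integrable_const _)
    calc m₀ + b / 2 * ∑ l, |g l| ≤ supF (H i) - 0 + b / 2 * ∑ l, |g l| := by
          linarith [hm i]
      _ = ∫ x, ((⨆ t : H i, ∑ l, x l * (t : Fin d → ℝ) l)
        - ∑ l, x l * (1 / 4 * u i l) + b / 2 * ∑ l, |g l|) ∂(gaussPi (Fin d)) := by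
          rw [integral_add hR₀ (integrable_const _),
            integral_sub (integrable_esup fun t : H i => (t : Fin d → ℝ)) (integrable_linear _),
            integral_linear]
          simp [supF, esup]
      _ ≤ _ := by
          refine integral_mono hR hgi fun x => ?_
          obtain ⟨t, ht⟩ := exists_eq_ciSup_of_finite
            (f := fun t : H i => ∑ l, x l * (t : Fin d → ℝ) l)
          simp only [← ht]
          refine le_trans (le_of_eq ?_) (le_ciSup (f := fun t =>
            ∑ l, (Sum.elim x g : Fin d ⊕ Fin k → ℝ) l * z (1 / 2) t l)
              (Set.finite_range _).bddAbove ⟨i, t⟩)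
          simp only [z, Fintype.sum_sum_type, Sum.elim_inl, Sum.elim_inr]
          rw [← Finset.sum_sub_distrib, Finset.mul_sum]
          congr 1
          · exact Finset.sum_congr rfl fun l _ => by ring
          · exact Finset.sum_congr rfl fun l _ => by rw [← hsgn l]; ring
  exact hend.trans (hcomp.trans hstart)

/-! ### From the growth condition to chaining -/

/-- A finite pseudometric space with a set functional satisfying the growth condition with constant
`c`. The metric is kept as a bare function so that it can be the Euclidean distance `eucDist`. -/
structure GrowthSpace (α : Type*) [Fintype α] (D : α → α → ℝ) (F : Finset α → ℝ) (c : ℝ) : Prop where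
  self : ∀ x, D x x = 0
  symm : ∀ x y, D x y = D y x
  tri : ∀ x y z, D x z ≤ D x y + D y z
  cpos : 0 < c
  mono : ∀ A B : Finset α, A.Nonempty → A ⊆ B → F A ≤ F B
  nonneg : ∀ A : Finset α, A.Nonempty → 0 ≤ F A
  growth : ∀ (n : ℕ) (u : (Fin (2 ^ n) → Bool) → α) (H : (Fin (2 ^ n) → Bool) → Finset α)
    (V : Finset α) (a σ m₀ : ℝ), 0 ≤ a → 0 ≤ σ → 8 * σ ≤ a →
    (∀ i j, i ≠ j → a ≤ D (u i) (u j)) → (∀ i, (H i).Nonempty) →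
    (∀ i, ∀ t ∈ H i, D (u i) t ≤ σ) → (∀ i, H i ⊆ V) → (∀ i, m₀ ≤ F (H i)) →
    m₀ + c * a * Real.sqrt 2 ^ n ≤ F V

/-- Closed ball as a finset. -/
noncomputable def cball {α : Type*} [Fintype α] (D : α → α → ℝ) (x : α) (s : ℝ) : Finset α :=
  open Classical in Finset.univ.filter fun y => D x y ≤ s

lemma mem_cball {α : Type*} [Fintype α] {D : α → α → ℝ} {x y : α} {s : ℝ} :
    y ∈ cball D x s ↔ D x y ≤ s := by simp [cball]

/-- `Chains D N g`: there are labellings of `α` by at most `2^(2^n)` labels whose cells have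
diameters bounded by `δ n x` (a function of `x` that is constant on each cell) with
`∑_{n<N} 2^{n/2} δ n x ≤ g` for all `x`. -/
def Chains {α : Type*} (D : α → α → ℝ) (N : ℕ) (g : ℝ) : Prop :=
  ∃ (A : (n : ℕ) → α → Fin (2 ^ 2 ^ n)) (δ : ℕ → α → ℝ),
    (∀ n x y, A n x = A n y → D x y ≤ δ n x ∧ δ n x = δ n y) ∧
    ∀ x, ∑ n ∈ Finset.range N, Real.sqrt 2 ^ n * δ n x ≤ g

lemma Chains.mono {α : Type*} {D : α → α → ℝ} {N : ℕ} {g g' : ℝ} (h : Chains D N g)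
    (hg : g ≤ g') : Chains D N g' := by
  obtain ⟨A, δ, h1, h2⟩ := h
  exact ⟨A, δ, h1, fun x => (h2 x).trans hg⟩

/-- Dyadic discretization of a number in `[0, S]` to `n + 1` levels. -/
lemma exists_level (n : ℕ) (s S : ℝ) (hs : 0 ≤ s) (hsS : s ≤ S) :
    ∃ k : Fin (n + 1), s ≤ S / 2 ^ (k : ℕ) ∧ S / 2 ^ (k : ℕ) ≤ 2 * s + S / 2 ^ n := by
  induction n generalizing S with
  | zero => exact ⟨0, by simpa using hsS, by simp; linarith⟩
  | succ n ih =>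
    by_cases h : s ≤ S / 2
    · obtain ⟨k, h1, h2⟩ := ih (S / 2) h
      have e : ∀ m : ℕ, S / 2 / 2 ^ m = S / 2 ^ (m + 1) := fun m => by
        rw [pow_succ', div_div]
      rw [e] at h1
      rw [e, e] at h2
      exact ⟨k.succ, by simpa using h1, by simpa using h2⟩
    · have h3 : 0 ≤ S / 2 ^ (n + 1) := div_nonneg (hs.trans hsS) (by positivity)
      refine ⟨0, by simpa using hsS, ?_⟩
      simp only [Fin.val_zero, pow_zero, div_one]
      linarith

section growth

variable {α : Type*} [Fintype α] {D : α → α → ℝ} {F : Finset α → ℝ} {c : ℝ}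

lemma GrowthSpace.dist_nonneg (G : GrowthSpace α D F c) (x y : α) : 0 ≤ D x y := by
  have h1 := G.tri x y x
  rw [G.self, G.symm y x] at h1
  linarith

lemma GrowthSpace.self_mem (G : GrowthSpace α D F c) (x : α) {s : ℝ} (hs : 0 ≤ s) :
    x ∈ cball D x s := mem_cball.2 (by rw [G.self]; exact hs)

/-- The interpolation functional `s ↦ τ s - F(B(x, s))` attains its minimum. -/
lemma GrowthSpace.exists_minimizer (G : GrowthSpace α D F c) {τ : ℝ} (hτ : 0 ≤ τ) (x : α) :
    ∃ s : ℝ, 0 ≤ s ∧ ∀ s' : ℝ, 0 ≤ s' →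
      τ * s - F (cball D x s) ≤ τ * s' - F (cball D x s') := by
  obtain ⟨y, -, hy⟩ := Finset.exists_min_image Finset.univ
    (fun y => τ * D x y - F (cball D x (D x y))) ⟨x, Finset.mem_univ x⟩
  refine ⟨D x y, G.dist_nonneg x y, fun s' hs' => ?_⟩
  obtain ⟨w, hw, hmax⟩ := Finset.exists_max_image (cball D x s') (fun y => D x y)
    ⟨x, G.self_mem x hs'⟩
  have e : cball D x (D x w) = cball D x s' := by
    ext v
    rw [mem_cball]
    exact ⟨fun h => mem_cball.2 (h.trans (mem_cball.1 hw)), fun h => hmax v h⟩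
  refine (hy w (Finset.mem_univ w)).trans ?_
  rw [e]
  have := mul_le_mul_of_nonneg_left (mem_cball.1 hw) hτ
  linarith

lemma sqrt_two_bounds : 1 ≤ Real.sqrt 2 ∧ 4 / 3 ≤ Real.sqrt 2 ∧ Real.sqrt 2 ≤ 2 := by
  refine ⟨?_, ?_, ?_⟩
  · rw [Real.le_sqrt' (by norm_num)]; norm_num
  · rw [Real.le_sqrt' (by norm_num)]; norm_num
  · rw [Real.sqrt_le_left (by norm_num)]; norm_num

/-- The minimizers `s n x` at the levels `τ = κ 2^{n/2}` are summable against `2^{n/2}`, because the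
minimal values telescope. -/
lemma GrowthSpace.exists_scales (G : GrowthSpace α D F c) {κ : ℝ} (hκ : 0 < κ) :
    ∃ s : ℕ → α → ℝ, (∀ n x, 0 ≤ s n x) ∧
      (∀ n x s', 0 ≤ s' → κ * Real.sqrt 2 ^ n * s n x - F (cball D x (s n x))
        ≤ κ * Real.sqrt 2 ^ n * s' - F (cball D x s')) ∧
      ∀ N x, ∑ n ∈ Finset.range N, Real.sqrt 2 ^ n * s n x ≤ 4 / κ * F Finset.univ := by
  obtain ⟨h1, h43, -⟩ := sqrt_two_bounds
  set r := Real.sqrt 2 with hr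
  have hr0 : 0 < r := by linarith
  choose s hs0 hs using fun (n : ℕ) (x : α) =>
    G.exists_minimizer (τ := κ * r ^ n) (by positivity) x
  refine ⟨s, hs0, hs, fun N x => ?_⟩
  have hFle : ∀ s', 0 ≤ s' → F (cball D x s') ≤ F Finset.univ := fun s' h =>
    G.mono _ _ ⟨x, G.self_mem x h⟩ (Finset.subset_univ _)
  have key : ∀ N, κ / 4 * ∑ n ∈ Finset.range (N + 1), r ^ n * s n x
      ≤ κ * r ^ N * s N x - F (cball D x (s N x)) + F Finset.univ := by
    intro N
    induction N with
    | zero =>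
      have := hFle _ (hs0 0 x)
      have := mul_nonneg hκ.le (hs0 0 x)
      simp
      linarith
    | succ N ih =>
      rw [Finset.sum_range_succ, mul_add]
      have h2 := hs N x (s (N + 1) x) (hs0 _ _)
      have h3 : 0 ≤ κ * (r ^ N * s (N + 1) x) :=
        mul_nonneg hκ.le (mul_nonneg (by positivity) (hs0 _ _))
      have h4 : κ / 4 * (r ^ (N + 1) * s (N + 1) x)
          ≤ κ * r ^ (N + 1) * s (N + 1) x - κ * r ^ N * s (N + 1) x := by
        rw [pow_succ]
        nlinarith
      linarith
  have hN : κ / 4 * ∑ n ∈ Finset.range N, r ^ n * s n x ≤ F Finset.univ := by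
    cases N with
    | zero => simpa using G.nonneg Finset.univ ⟨x, Finset.mem_univ x⟩
    | succ N =>
      have h2 := hs N x 0 le_rfl
      have h3 := G.nonneg (cball D x 0) ⟨x, G.self_mem x le_rfl⟩
      have := key N
      linarith
  have : ∑ n ∈ Finset.range N, r ^ n * s n x
      = 4 / κ * (κ / 4 * ∑ n ∈ Finset.range N, r ^ n * s n x) := by field_simp
  rw [this]
  exact mul_le_mul_of_nonneg_left hN (by positivity)

/-- A set in which no `2^(2^n)` points are `ε`-separated splits into at most `2^(2^n)` cells of
diameter at most `2ε`. -/
lemma GrowthSpace.exists_label (G : GrowthSpace α D F c) (A : Set α) (n : ℕ) (ε : ℝ)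
    (hε : 0 ≤ ε)
    (hno : ¬ ∃ u : (Fin (2 ^ n) → Bool) → α, (∀ i, u i ∈ A) ∧ ∀ i j, i ≠ j → ε < D (u i) (u j)) :
    ∃ f : α → Fin (2 ^ 2 ^ n), ∀ x ∈ A, ∀ y ∈ A, f x = f y → D x y ≤ 2 * ε := by
  classical
  obtain ⟨U, hU, hmax⟩ := Finset.exists_max_image
    ((Finset.univ : Finset (Finset α)).filter fun U => (∀ x ∈ U, x ∈ A) ∧
      ∀ x ∈ U, ∀ y ∈ U, x ≠ y → ε < D x y) Finset.card ⟨∅, by simp⟩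
  simp only [Finset.mem_filter, Finset.mem_univ, true_and] at hU hmax
  have hcard : U.card ≤ 2 ^ 2 ^ n := by
    by_contra! hlt
    have hc : Fintype.card (Fin (2 ^ n) → Bool) ≤ Fintype.card U := by simp; omega
    obtain ⟨e⟩ := Function.Embedding.nonempty_of_card_le hc
    exact hno ⟨fun i => e i, fun i => hU.1 _ (e i).2, fun i j hij =>
      hU.2 _ (e i).2 _ (e j).2 fun h => hij (e.injective (Subtype.ext h))⟩
  have hc : Fintype.card U ≤ Fintype.card (Fin (2 ^ 2 ^ n)) := by simpa using hcard
  obtain ⟨e⟩ := Function.Embedding.nonempty_of_card_le hc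
  have hcov : ∀ x, x ∈ A → ∃ v : U, D x v ≤ ε := by
    intro x hx
    by_contra! hfar
    have hxU : x ∉ U := fun h => by
      have := hfar ⟨x, h⟩
      rw [G.self] at this
      linarith
    have := hmax (insert x U) ⟨?_, ?_⟩
    · rw [Finset.card_insert_of_notMem hxU] at this
      omega
    · intro y hy
      rcases Finset.mem_insert.1 hy with rfl | h
      · exact hx
      · exact hU.1 y h
    · intro y hy z hz hyz
      rcases Finset.mem_insert.1 hy with rfl | h <;> rcases Finset.mem_insert.1 hz with rfl | h'
      · exact absurd rfl hyz
      · exact hfar ⟨z, h'⟩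
      · rw [G.symm]; exact hfar ⟨y, h⟩
      · exact hU.2 y h z h' hyz
  have hlab : ∀ x, ∃ l : Fin (2 ^ 2 ^ n), x ∈ A → ∃ v : U, e v = l ∧ D x v ≤ ε := by
    intro x
    by_cases hx : x ∈ A
    · obtain ⟨v, hv⟩ := hcov x hx
      exact ⟨e v, fun _ => ⟨v, rfl, hv⟩⟩
    · exact ⟨⟨0, by positivity⟩, fun h => absurd h hx⟩
  choose f hf using hlab
  refine ⟨f, fun x hx y hy hxy => ?_⟩
  obtain ⟨v, hv, hv'⟩ := hf x hx
  obtain ⟨w, hw, hw'⟩ := hf y hy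
  have hvw : v = w := e.injective (by rw [hv, hw, hxy])
  subst hvw
  have := G.tri x v y
  rw [G.symm v y] at this
  linarith

/-- In a set of diameter at most `δ` on which the minimizers are at most `σ`, no `2^(2^n)` points are
`(δ + σ) / 8 + 8 σ`-separated: otherwise, at the centre `u i₀` whose ball `B(u i₀, s n (u i₀))` has
the smallest value of `F`, the growth condition makes the radius `δ + σ` better than the minimizer.
-/
lemma GrowthSpace.not_separated (G : GrowthSpace α D F c) {s : ℕ → α → ℝ}
    (hs0 : ∀ n x, 0 ≤ s n x)
    (hs : ∀ n x s', 0 ≤ s' → c / 8 * Real.sqrt 2 ^ n * s n x - F (cball D x (s n x))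
        ≤ c / 8 * Real.sqrt 2 ^ n * s' - F (cball D x s'))
    (n : ℕ) (A : Set α) {δ σ : ℝ} (hδ : 0 ≤ δ) (hσ : 0 ≤ σ)
    (hdiam : ∀ x ∈ A, ∀ y ∈ A, D x y ≤ δ) (hsσ : ∀ x ∈ A, s n x ≤ σ) :
    ¬ ∃ u : (Fin (2 ^ n) → Bool) → α, (∀ i, u i ∈ A) ∧
      ∀ i j, i ≠ j → (δ + σ) / 8 + 8 * σ < D (u i) (u j) := by
  rintro ⟨u, huA, hu⟩
  have hc := G.cpos
  have hr : 0 < Real.sqrt 2 ^ n := by positivity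
  obtain ⟨a, ha, hεa⟩ : ∃ a, (∀ i j, i ≠ j → a ≤ D (u i) (u j)) ∧ (δ + σ) / 8 + 8 * σ < a := by
    have h1 : ∀ᶠ a in nhdsWithin ((δ + σ) / 8 + 8 * σ) (Set.Ioi ((δ + σ) / 8 + 8 * σ)),
        ∀ i j, i ≠ j → a ≤ D (u i) (u j) := by
      refine Filter.eventually_all.2 fun i => Filter.eventually_all.2 fun j => ?_
      by_cases hij : i = j
      · exact Filter.Eventually.of_forall fun a h => absurd hij h
      · filter_upwards [Ioo_mem_nhdsGT (hu i j hij)] with a h _ using h.2.le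
    exact (h1.and self_mem_nhdsWithin).exists
  obtain ⟨i₀, -, hi₀⟩ := Finset.exists_min_image Finset.univ
    (fun i => F (cball D (u i) (s n (u i)))) ⟨fun _ => true, Finset.mem_univ _⟩
  have hg := G.growth n u (fun i => cball D (u i) (s n (u i))) (cball D (u i₀) (δ + σ)) a σ
    (F (cball D (u i₀) (s n (u i₀)))) (by linarith) hσ (by linarith) ha
    (fun i => ⟨u i, G.self_mem _ (hs0 _ _)⟩)
    (fun i t ht => (mem_cball.1 ht).trans (hsσ _ (huA i)))
    (fun i t ht => mem_cball.2 (by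
      have h1 := G.tri (u i₀) (u i) t
      have h2 := hdiam _ (huA i₀) _ (huA i)
      have h3 := (mem_cball.1 ht).trans (hsσ _ (huA i))
      linarith))
    (fun i => hi₀ i (Finset.mem_univ i))
  have hmin := hs n (u i₀) (δ + σ) (by linarith)
  have h1 : 0 ≤ c / 8 * Real.sqrt 2 ^ n * s n (u i₀) :=
    mul_nonneg (by positivity) (hs0 _ _)
  have h2 : (δ + σ) / 8 < a := by linarith
  have h3 := mul_lt_mul_of_pos_left h2 (mul_pos hc hr)
  nlinarith

lemma card_cells (n : ℕ) :
    Fintype.card (Fin (2 ^ 2 ^ n) × Fin (n + 1) × Fin (2 ^ 2 ^ n))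
      ≤ Fintype.card (Fin (2 ^ 2 ^ (n + 2))) := by
  simp only [Fintype.card_prod, Fintype.card_fin]
  have h1 : n + 1 ≤ 2 ^ 2 ^ n :=
    (Nat.lt_two_pow_self (n := n)).trans_le (Nat.pow_le_pow_right (by norm_num)
      Nat.lt_two_pow_self.le)
  calc 2 ^ 2 ^ n * ((n + 1) * 2 ^ 2 ^ n) ≤ 2 ^ 2 ^ n * (2 ^ 2 ^ n * 2 ^ 2 ^ n) := by gcongr
    _ = 2 ^ (3 * 2 ^ n) := by rw [← pow_add, ← pow_add]; congr 1; ring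
    _ ≤ 2 ^ 2 ^ (n + 2) := Nat.pow_le_pow_right (by norm_num) (by rw [pow_add]; omega)

/-- The contraction step: cutting every cell at stage `n` according to the size of `s n` and then
covering the pieces gives the cells of stage `n + 2` of a new chain. Up to the contribution of the
minimizers and of the diameter, the value of the chain is halved. -/
lemma GrowthSpace.contraction [Nonempty α] (G : GrowthSpace α D F c) {Δ : ℝ}
    (hΔ : ∀ x y, D x y ≤ Δ) {N : ℕ} {g : ℝ} (hg : Chains D N g) :
    Chains D N (g / 2 + (3 * Δ + 132 * (32 / c * F Finset.univ))) := by
  classical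
  have hc := G.cpos
  obtain ⟨s, hs0, hs, hsum⟩ := G.exists_scales (κ := c / 8) (by positivity)
  obtain ⟨A, δ, hA, hAg⟩ := hg
  obtain ⟨x₀⟩ := ‹Nonempty α›
  have hΔ0 : 0 ≤ Δ := (G.dist_nonneg x₀ x₀).trans (hΔ _ _)
  have hδ0 : ∀ n x, 0 ≤ δ n x := fun n x => (G.dist_nonneg x x).trans (hA n x x rfl).1
  have hr2 : Real.sqrt 2 ^ 2 = 2 := Real.sq_sqrt (by norm_num)
  obtain ⟨-, -, hr⟩ := sqrt_two_bounds
  have hr0 : 0 < Real.sqrt 2 := by positivity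
  set r := Real.sqrt 2
  set S : ℝ := 32 / c * F Finset.univ with hS
  have hS' : 4 / (c / 8) * F Finset.univ = S := by rw [hS]; congr 1; field_simp; norm_num
  have hS0 : 0 ≤ S := mul_nonneg (by positivity) (G.nonneg _ ⟨x₀, Finset.mem_univ _⟩)
  have hsS : ∀ n x, s n x ≤ S / r ^ n := fun n x => by
    rw [le_div_iff₀ (by positivity), mul_comm, ← hS']
    refine le_trans ?_ (hsum (n + 1) x)
    exact Finset.single_le_sum (f := fun n => r ^ n * s n x)
      (fun m _ => mul_nonneg (by positivity) (hs0 m x)) (Finset.self_mem_range_succ n)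
  choose k hk1 hk2 using fun n x => exists_level n (s n x) (S / r ^ n) (hs0 n x) (hsS n x)
  have hlab : ∀ n (l : Fin (2 ^ 2 ^ n)) (j : Fin (n + 1)), ∃ f : α → Fin (2 ^ 2 ^ n),
      ∀ x y, A n x = l → k n x = j → A n y = l → k n y = j → f x = f y →
        D x y ≤ 2 * ((δ n x + S / r ^ n / 2 ^ (j : ℕ)) / 8 + 8 * (S / r ^ n / 2 ^ (j : ℕ))) := by
    intro n l j
    have hσ : 0 ≤ S / r ^ n / 2 ^ (j : ℕ) := by positivity
    by_cases hne : ∃ x, A n x = l ∧ k n x = j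
    · obtain ⟨x₁, hx₁, -⟩ := hne
      have hδ : ∀ x, A n x = l → δ n x = δ n x₁ := fun x hx =>
        (hA n x x₁ (hx.trans hx₁.symm)).2
      obtain ⟨f, hf⟩ := G.exists_label {x | A n x = l ∧ k n x = j} n
        ((δ n x₁ + S / r ^ n / 2 ^ (j : ℕ)) / 8 + 8 * (S / r ^ n / 2 ^ (j : ℕ)))
        (by have := hδ0 n x₁; positivity)
        (G.not_separated hs0 hs n _ (hδ0 n x₁) hσ
          (fun x hx y hy => by
            rw [← hδ x hx.1]
            exact (hA n x y (hx.1.trans hy.1.symm)).1)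
          (fun x hx => by
            have := hk1 n x
            rwa [hx.2] at this))
      refine ⟨f, fun x y h1 h2 h3 h4 h5 => ?_⟩
      rw [hδ x h1]
      exact hf x ⟨h1, h2⟩ y ⟨h3, h4⟩ h5
    · exact ⟨fun _ => ⟨0, by positivity⟩, fun x y h1 h2 => absurd ⟨x, h1, h2⟩ hne⟩
  choose f hf using hlab
  have e : ∀ n, Nonempty
      (Fin (2 ^ 2 ^ n) × Fin (n + 1) × Fin (2 ^ 2 ^ n) ↪ Fin (2 ^ 2 ^ (n + 2))) := fun n =>
    Function.Embedding.nonempty_of_card_le (card_cells n)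
  replace e := fun n => (e n).some
  let σ : ℕ → α → ℝ := fun n x => S / r ^ n / 2 ^ (k n x : ℕ)
  have hσ0 : ∀ n x, 0 ≤ σ n x := fun n x => by positivity
  let A' : (n : ℕ) → α → Fin (2 ^ 2 ^ n) := fun n => match n with
    | 0 => fun _ => ⟨0, by positivity⟩
    | 1 => fun _ => ⟨0, by positivity⟩
    | n + 2 => fun x => e n (A n x, k n x, f n (A n x) (k n x) x)
  let δ' : ℕ → α → ℝ := fun n => match n with
    | 0 => fun _ => Δ
    | 1 => fun _ => Δ
    | n + 2 => fun x => 2 * ((δ n x + σ n x) / 8 + 8 * σ n x)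
  refine ⟨A', δ', ?_, fun x => ?_⟩
  · intro n x y hxy
    match n with
    | 0 => exact ⟨hΔ x y, rfl⟩
    | 1 => exact ⟨hΔ x y, rfl⟩
    | n + 2 =>
      have h := (e n).injective hxy
      simp only [Prod.mk.injEq] at h
      obtain ⟨h1, h2, h3⟩ := h
      refine ⟨hf n (A n x) (k n x) x y rfl rfl h1.symm h2.symm ?_, ?_⟩
      · rw [h3, h1, h2]
      · simp only [δ', σ, h2, (hA n x y h1).2]
  · have hδ'0 : ∀ n, 0 ≤ δ' n x := fun n => by
      match n with
      | 0 => exact hΔ0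
      | 1 => exact hΔ0
      | n + 2 =>
        have := hδ0 n x
        have := hσ0 n x
        simp only [δ']
        positivity
    have h1 : ∑ n ∈ Finset.range N, r ^ n * δ' n x ≤ ∑ n ∈ Finset.range (N + 2), r ^ n * δ' n x :=
      Finset.sum_le_sum_of_subset_of_nonneg (Finset.range_mono (by omega))
        fun n _ _ => mul_nonneg (by positivity) (hδ'0 n)
    have h2 : ∀ n, r ^ (n + 2) * δ' (n + 2) x
        ≤ 1 / 2 * (r ^ n * δ n x) + 66 * (r ^ n * s n x) + 33 * (S * (1 / 2) ^ n) := fun n => by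
      have h3 : r ^ n * σ n x ≤ 2 * (r ^ n * s n x) + S * (1 / 2) ^ n := by
        have := mul_le_mul_of_nonneg_left (hk2 n x) (pow_nonneg hr0.le n)
        refine this.trans (le_of_eq ?_)
        have : r ^ n ≠ 0 := by positivity
        rw [one_div, inv_pow]
        field_simp
      have h4 : 0 ≤ r ^ n * σ n x := mul_nonneg (by positivity) (hσ0 n x)
      have h5 : r ^ (n + 2) * δ' (n + 2) x
          = 1 / 2 * (r ^ n * δ n x) + 65 / 2 * (r ^ n * σ n x) := by
        rw [pow_add, hr2]; simp only [δ']; ring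
      rw [h5]
      linarith
    have h3 : ∑ n ∈ Finset.range N, S * (1 / 2 : ℝ) ^ n ≤ 2 * S := by
      rw [← Finset.mul_sum]
      have : ∑ n ∈ Finset.range N, (1 / 2 : ℝ) ^ n ≤ 2 := sum_geometric_two_le N
      nlinarith
    have h4 := hsum N x
    rw [hS'] at h4
    have h5 := Finset.sum_le_sum fun n (_ : n ∈ Finset.range N) => h2 n
    rw [Finset.sum_add_distrib, Finset.sum_add_distrib, ← Finset.mul_sum, ← Finset.mul_sum,
      ← Finset.mul_sum] at h5
    have h6 := hAg x
    rw [Finset.sum_range_succ', Finset.sum_range_succ'] at h1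
    have h7 : r ^ (0 + 1) * δ' (0 + 1) x ≤ 2 * Δ := by
      simp only [zero_add, pow_one, δ']
      exact mul_le_mul_of_nonneg_right hr hΔ0
    have h8 : r ^ 0 * δ' 0 x = Δ := by simp [δ']
    have h9 : ∀ n, r ^ (n + 1 + 1) * δ' (n + 1 + 1) x = r ^ (n + 2) * δ' (n + 2) x := fun n => rfl
    simp only [h9] at h1
    linarith

/-- The diameter is controlled by the growth condition for two points. -/
lemma GrowthSpace.diam_le (G : GrowthSpace α D F c) (x y : α) :
    D x y ≤ F Finset.univ / c := by
  rw [le_div_iff₀ G.cpos]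
  have := G.growth 0 (fun i => if i 0 then x else y) (fun i => {if i 0 then x else y})
    Finset.univ (D x y) 0 0 (G.dist_nonneg _ _) le_rfl (by simpa using G.dist_nonneg x y)
    (fun i j hij => by
      have h : i 0 ≠ j 0 := fun h => hij (funext fun l => by
        have : l = 0 := Fin.ext (Nat.lt_one_iff.1 l.isLt)
        rw [this, h])
      cases hi : i 0 <;> cases hj : j 0 <;> simp_all [G.symm y x])
    (fun i => Finset.singleton_nonempty _)
    (fun i t ht => by rw [Finset.mem_singleton.1 ht, G.self])
    (fun i => Finset.subset_univ _) (fun i => G.nonneg _ (Finset.singleton_nonempty _))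
  simp only [pow_zero, mul_one, zero_add] at this
  linarith

/-- Iterating the contraction step from the one-cell chain. The constant `8454 = 2 (3 + 132 · 32)`
is the fixed point of `g ↦ g / 2 + 3 + 132 · 32`. -/
lemma GrowthSpace.chains [Nonempty α] (G : GrowthSpace α D F c) (N : ℕ) {ε : ℝ} (hε : 0 < ε) :
    Chains D N (8454 * (F Finset.univ / c) + ε) := by
  obtain ⟨x₀⟩ := ‹Nonempty α›
  have hne : Nonempty α := ⟨x₀⟩
  set Δ := F Finset.univ / c with hΔ
  have hΔ0 : 0 ≤ Δ := (G.dist_nonneg x₀ x₀).trans (G.diam_le _ _)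
  set g₀ := ∑ n ∈ Finset.range N, Real.sqrt 2 ^ n * Δ
  have h : ∀ m : ℕ, Chains D N (8454 * Δ + g₀ / 2 ^ m) := by
    intro m
    induction m with
    | zero =>
      refine Chains.mono (g := g₀) ⟨fun n _ => ⟨0, by positivity⟩, fun _ _ => Δ,
        fun n x y _ => ⟨G.diam_le x y, rfl⟩, fun x => le_rfl⟩ ?_
      simp only [pow_zero, div_one]
      linarith
    | succ m ih =>
      refine (G.contraction G.diam_le ih).mono (le_of_eq ?_)
      rw [← hΔ, pow_succ]
      have : 32 / c * F Finset.univ = 32 * Δ := by rw [hΔ]; ring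
      rw [this]
      field_simp
      ring
  obtain ⟨m, hm⟩ := exists_nat_gt (g₀ / ε)
  refine (h m).mono (by
    have h2 : (m : ℝ) < 2 ^ m := by exact_mod_cast Nat.lt_two_pow_self
    have h3 : g₀ / ε ≤ 2 ^ m := (hm.trans h2).le
    rw [div_le_iff₀ hε] at h3
    have : g₀ / 2 ^ m ≤ ε := by
      rw [div_le_iff₀ (by positivity)]; linarith
    linarith)

end growth

/-! ### Admissible sequences and the theorem -/

lemma eucDist_nonneg {d : ℕ} (x y : Fin d → ℝ) : 0 ≤ eucDist x y := Real.sqrt_nonneg _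

lemma eucDist_self {d : ℕ} (x : Fin d → ℝ) : eucDist x x = 0 := by simp [eucDist]

lemma eucDist_eq_dist {d : ℕ} (x y : Fin d → ℝ) :
    eucDist x y = dist (WithLp.toLp 2 x : EuclideanSpace ℝ (Fin d)) (WithLp.toLp 2 y) := by
  simp [eucDist, EuclideanSpace.dist_eq, Real.dist_eq, sq_abs]

lemma eucDist_sq {d : ℕ} (x y : Fin d → ℝ) : eucDist x y ^ 2 = ∑ i, (x i - y i) ^ 2 :=
  Real.sq_sqrt (Finset.sum_nonneg fun _ _ => sq_nonneg _)

lemma eucDist_comm {d : ℕ} (x y : Fin d → ℝ) : eucDist x y = eucDist y x := by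
  rw [eucDist_eq_dist, dist_comm, ← eucDist_eq_dist]

lemma supF_mono {d : ℕ} {A B : Finset (Fin d → ℝ)} (hA : A.Nonempty) (h : A ⊆ B) :
    supF A ≤ supF B := by
  have : Nonempty A := hA.to_subtype
  have : Nonempty B := (hA.mono h).to_subtype
  refine integral_mono (integrable_esup _) (integrable_esup _) fun w => ?_
  exact ciSup_le fun t => le_ciSup (f := fun t : B => ∑ k, w k * (t : Fin d → ℝ) k)
    (Set.finite_range _).bddAbove ⟨t, h t.2⟩

lemma supF_nonneg {d : ℕ} {A : Finset (Fin d → ℝ)} (hA : A.Nonempty) : 0 ≤ supF A := by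
  have : Nonempty A := hA.to_subtype
  obtain ⟨t, ht⟩ := hA
  rw [← integral_linear t]
  refine integral_mono (integrable_linear t) (integrable_esup _) fun w => ?_
  exact le_ciSup (f := fun t : A => ∑ k, w k * (t : Fin d → ℝ) k)
    (Set.finite_range _).bddAbove ⟨t, ht⟩

lemma sqrt_two_pow (n : ℕ) : Real.sqrt ((2 ^ n : ℕ) : ℝ) = Real.sqrt 2 ^ n := by
  rw [Real.sqrt_eq_iff_mul_self_eq (by positivity) (by positivity), ← mul_pow,
    Real.mul_self_sqrt (by norm_num)]
  push_cast
  rfl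

lemma growthSpace_finset {d : ℕ} (T : Finset (Fin d → ℝ)) :
    GrowthSpace T (fun x y => eucDist (x : Fin d → ℝ) y)
      (fun A => supF (A.map (Function.Embedding.subtype _))) (absMoment / 4) where
  self x := eucDist_self _
  symm x y := eucDist_comm _ _
  tri x y z := by
    simp only [eucDist_eq_dist]
    exact dist_triangle _ _ _
  cpos := div_pos absMoment_pos (by norm_num)
  mono A B hA h := supF_mono (hA.map) (Finset.map_subset_map.2 h)
  nonneg A hA := supF_nonneg hA.map
  growth n u H V a σ m₀ ha hσ hσa hsep hne hball hV hm := by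
    have h := supF_growth (k := 2 ^ n) (by positivity) (fun i => (u i : Fin d → ℝ))
      (fun i => (H i).map (Function.Embedding.subtype _))
      (V.map (Function.Embedding.subtype _)) ha hσ hσa
      (fun i j hij => by
        rw [← eucDist_sq]
        exact pow_le_pow_left₀ ha (hsep i j hij) 2)
      (fun i => (hne i).map)
      (fun i t ht => by
        obtain ⟨t', ht', rfl⟩ := Finset.mem_map.1 ht
        rw [← eucDist_sq, eucDist_comm]
        exact pow_le_pow_left₀ (eucDist_nonneg _ _) (hball i t' ht') 2)
      (fun i => Finset.map_subset_map.2 (hV i)) hm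
    rwa [sqrt_two_pow] at h

lemma integral_sSup_eq {d : ℕ} (T : Finset (Fin d → ℝ)) :
    ∫ x, sSup ((fun t => ∑ i, x i * t i) '' (T : Set (Fin d → ℝ))) ∂(stdGaussian d) = supF T := by
  rw [supF, esup]
  simp only [sSup_image']
  rfl

lemma two_rpow_half (s : ℕ) : (2 : ℝ) ^ ((s : ℝ) / 2) = Real.sqrt 2 ^ s := by
  rw [Real.sqrt_eq_rpow, ← Real.rpow_natCast, ← Real.rpow_mul (by norm_num)]
  congr 1
  ring

/-- Labellings with small cells give an admissible sequence: choose one point from each cell, a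
single point at level `0`, and all of `T` from the level `N` on, where `|T| ≤ 2^(2^N)`. -/
lemma gammaTwo_le_of_chains {d : ℕ} {T : Finset (Fin d → ℝ)} (hT : T.Nonempty) {N : ℕ} {g Δ : ℝ}
    (hN : T.card ≤ 2 ^ 2 ^ N) (hΔ : ∀ x ∈ T, ∀ y ∈ T, eucDist x y ≤ Δ)
    (h : Chains (fun x y : T => eucDist (x : Fin d → ℝ) y) N g) :
    gammaTwo (T : Set (Fin d → ℝ)) ≤ Δ + g := by
  obtain ⟨A, δ, hA, hg⟩ := h
  obtain ⟨x₀, hx₀⟩ := hT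
  have : Nonempty T := ⟨⟨x₀, hx₀⟩⟩
  -- representatives of the cells
  let r : (n : ℕ) → Fin (2 ^ 2 ^ n) → T := fun n => Function.invFun (A n)
  have hr : ∀ n x, A n (r n (A n x)) = A n x := fun n x => Function.invFun_eq ⟨x, rfl⟩
  let Ts : ℕ → Set (Fin d → ℝ) := fun s =>
    if s = 0 then {x₀} else if s < N then Set.range fun l => (r s l : Fin d → ℝ) else T
  have hbdd : ∀ t (S : Set (Fin d → ℝ)), BddBelow (eucDist t '' S) := fun t S =>
    ⟨0, by rintro _ ⟨y, -, rfl⟩; exact eucDist_nonneg _ _⟩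
  have hpos : ∀ t (S : Set (Fin d → ℝ)), 0 ≤ sInf (eucDist t '' S) := fun t S =>
    Real.sInf_nonneg (by rintro _ ⟨y, -, rfl⟩; exact eucDist_nonneg _ _)
  refine csInf_le ⟨0, ?_⟩ ⟨Ts, ⟨by simp [Ts], fun s => ?_⟩, fun t ht => ?_⟩
  · rintro b ⟨Us, -, hU⟩
    obtain ⟨a, ha, hab⟩ := hU x₀ hx₀
    exact (ha.nonneg fun s => mul_nonneg (by positivity) (hpos _ _)).trans hab
  · by_cases hs : s = 0
    · have e : Ts s = {x₀} := by simp [Ts, hs]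
      rw [e]
      exact ⟨by simpa using hx₀, Set.singleton_nonempty _, Set.finite_singleton _, by
        rw [Set.ncard_singleton]; exact Nat.one_le_two_pow⟩
    by_cases hsN : s < N
    · have e : Ts s = Set.range fun l => (r s l : Fin d → ℝ) := by simp [Ts, hs, hsN]
      rw [e]
      refine ⟨?_, ⟨_, ⟨⟨0, by positivity⟩, rfl⟩⟩, Set.finite_range _, ?_⟩
      · rintro _ ⟨l, rfl⟩
        exact (r s l).2
      · rw [← Set.image_univ]
        refine (Set.ncard_image_le Set.finite_univ).trans ?_
        simp [Set.ncard_univ]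
    · have e : Ts s = T := by simp [Ts, hs, hsN]
      rw [e]
      refine ⟨subset_rfl, ⟨x₀, hx₀⟩, T.finite_toSet, ?_⟩
      rw [Set.ncard_coe_finset]
      exact hN.trans (Nat.pow_le_pow_right (by norm_num)
        (Nat.pow_le_pow_right (by norm_num) (not_lt.1 hsN)))
  · have hΔ0 : 0 ≤ Δ := (eucDist_nonneg _ _).trans (hΔ x₀ hx₀ x₀ hx₀)
    have hδ0 : ∀ n x, 0 ≤ δ n x := fun n x => (eucDist_nonneg _ _).trans (hA n x x rfl).1
    refine ⟨_, hasSum_sum_of_ne_finset_zero (s := Finset.range (N + 1)) fun s hs => ?_, ?_⟩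
    · have h1 : ¬ s < N + 1 := by simpa using hs
      have e : Ts s = T := by simp [Ts, show s ≠ 0 by omega, show ¬ s < N by omega]
      have h2 : sInf (eucDist t '' Ts s) = 0 := by
        refine le_antisymm (csInf_le (hbdd _ _) ⟨t, ?_, eucDist_self t⟩) (hpos _ _)
        rw [e]; exact ht
      rw [h2, mul_zero]
    · have hterm : ∀ s : ℕ, (2 : ℝ) ^ ((s : ℝ) / 2) * sInf (eucDist t '' Ts s)
          ≤ (if s = 0 then Δ else 0) + if s < N then Real.sqrt 2 ^ s * δ s ⟨t, ht⟩ else 0 := by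
        intro s
        have hw : 0 ≤ Real.sqrt 2 ^ s * δ s ⟨t, ht⟩ := mul_nonneg (by positivity) (hδ0 _ _)
        rw [two_rpow_half]
        by_cases hs : s = 0
        · subst hs
          have e : Ts 0 = {x₀} := by simp [Ts]
          have h3 : sInf (eucDist t '' Ts 0) ≤ Δ :=
            (csInf_le (hbdd _ _) ⟨x₀, by rw [e]; rfl, rfl⟩).trans (hΔ t ht x₀ hx₀)
          rw [if_pos rfl, pow_zero, one_mul]
          split_ifs
          · rw [pow_zero] at hw
            linarith
          · linarith
        rw [if_neg hs, zero_add]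
        by_cases hsN : s < N
        · rw [if_pos hsN]
          have e : Ts s = Set.range fun l => (r s l : Fin d → ℝ) := by simp [Ts, hs, hsN]
          refine mul_le_mul_of_nonneg_left ?_ (by positivity)
          refine (csInf_le (hbdd _ _) ⟨r s (A s ⟨t, ht⟩), ?_, rfl⟩).trans
            (hA s ⟨t, ht⟩ _ (hr s ⟨t, ht⟩).symm).1
          rw [e]
          exact ⟨_, rfl⟩
        · rw [if_neg hsN]
          have e : Ts s = T := by simp [Ts, hs, hsN]
          have h2 : sInf (eucDist t '' Ts s) ≤ 0 :=
            csInf_le (hbdd _ _) ⟨t, by rw [e]; exact ht, eucDist_self t⟩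
          exact mul_nonpos_of_nonneg_of_nonpos (by positivity) h2
      refine (Finset.sum_le_sum fun s _ => hterm s).trans ?_
      rw [Finset.sum_add_distrib]
      refine add_le_add (le_of_eq (by simp)) (le_trans (le_of_eq ?_) (hg ⟨t, ht⟩))
      rw [Finset.sum_range_succ, if_neg (lt_irrefl N), add_zero]
      exact Finset.sum_congr rfl fun s hs => if_pos (Finset.mem_range.1 hs)

/-- Talagrand's majorizing measures theorem (the lower bound),
`c₁ γ₂(T) ≤ E sup_{t∈T} ⟨G,t⟩`. -/
theorem gammaTwo_le_gaussian_sup :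
    ∃ c₁ : ℝ, 0 < c₁ ∧
      ∀ (d : ℕ) (T : Set (Fin d → ℝ)), T.Finite → T.Nonempty →
        c₁ * gammaTwo T ≤ ∫ x, sSup ((fun t => ∑ i, x i * t i) '' T) ∂(stdGaussian d) := by
  have hc : 0 < absMoment / 4 := div_pos absMoment_pos (by norm_num)
  refine ⟨absMoment / 4 / 8455, by positivity, fun d T hT hne => ?_⟩
  lift T to Finset (Fin d → ℝ) using hT
  have hne' : T.Nonempty := hne
  have : Nonempty T := hne'.to_subtype
  rw [integral_sSup_eq]
  have G := growthSpace_finset T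
  have eU : (Finset.univ : Finset T).map (Function.Embedding.subtype _) = T := by
    ext x
    simp
  have hdiam := G.diam_le
  simp only [eU] at hdiam
  have key : gammaTwo (T : Set (Fin d → ℝ)) ≤ 8455 * (supF T / (absMoment / 4)) := by
    refine le_of_forall_pos_le_add fun ε hε => ?_
    have hN : T.card ≤ 2 ^ 2 ^ T.card :=
      Nat.lt_two_pow_self.le.trans (Nat.pow_le_pow_right (by norm_num) Nat.lt_two_pow_self.le)
    have hch := G.chains T.card hε
    simp only [eU] at hch
    refine (gammaTwo_le_of_chains hne' hN (fun x hx y hy => hdiam ⟨x, hx⟩ ⟨y, hy⟩) hch).trans ?_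
    linarith
  calc absMoment / 4 / 8455 * gammaTwo (T : Set (Fin d → ℝ))
      ≤ absMoment / 4 / 8455 * (8455 * (supF T / (absMoment / 4))) := by gcongr
    _ = supF T := by
      have := absMoment_pos.ne'
      field_simp
end

section
/- Let p ∈ (2,3), let X₁,…,X_N be i.i.d. standard gaussian random vectors in ℝ^d. There is an absolute constant c > 0 such that with probability at least 1 − exp(−c·d), sup_{z ∈ S^{d−1}} (1/N) Σ_{i=1}^N |⟨X_i, z⟩|^p ≥ d^{p/2} / (2^{p/2} N). In particular, when d = βN this supremum is at least (β/2)^{p/2} · N^{p/2−1}, so the empirical p-th moment cannot satisfy a subgaussian uniform error bound over the sphere. -/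
/-!
Write `x₀` for the first sample vector. Testing the supremum at the direction `z = x₀ / ‖x₀‖₂` keeps
the single summand `|⟨x₀, z⟩|^p = ‖x₀‖₂^p`, so the supremum is at least `‖x₀‖₂^p / N`, which is at
least `(d/2)^{p/2} / N` as soon as `‖x₀‖₂² ≥ d/2` (`le_sSup_of_norm_sq`).

The latter event has overwhelming probability by Chernoff's inequality with parameter `-1/2`
(`stdGaussian_small_norm_le`): since `E exp(-g²/2) = 1/√2` for a standard normal `g`,
`P(‖x₀‖₂² ≤ d/2) ≤ exp(d/4) · 2^{-d/2} = exp(-c d)` with `c = (log 2)/2 - 1/4 > 0`.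
-/

open MeasureTheory ProbabilityTheory

/-- The Euclidean norm on `ℝ^d`. -/
noncomputable def eucNorm {d : ℕ} (x : Fin d → ℝ) : ℝ :=
  Real.sqrt (∑ i, (x i) ^ 2)

instance stdGaussian_isProbabilityMeasure (d : ℕ) : IsProbabilityMeasure (stdGaussian d) := by
  unfold _root_.stdGaussian
  infer_instance

lemma integral_exp_neg_half_sq_gaussianReal :
    ∫ x, Real.exp (-(1 / 2) * x ^ 2) ∂(gaussianReal 0 1) = Real.exp (-(Real.log 2 / 2)) := by
  rw [integral_gaussianReal_eq_integral_smul (by norm_num)]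
  have h : ∀ x : ℝ, gaussianPDFReal 0 1 x • Real.exp (-(1 / 2) * x ^ 2)
      = (√(2 * Real.pi))⁻¹ * Real.exp (-1 * x ^ 2) := by
    intro x
    simp only [gaussianPDFReal, smul_eq_mul, NNReal.coe_one, mul_one, sub_zero]
    rw [mul_assoc, ← Real.exp_add]
    ring_nf
  simp_rw [h]
  rw [integral_const_mul, integral_gaussian, div_one, Real.sqrt_mul (by norm_num), mul_inv, mul_assoc,
    inv_mul_cancel₀ (Real.sqrt_pos.mpr Real.pi_pos).ne', mul_one, Real.exp_neg, Real.exp_half,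
    Real.exp_log (by norm_num)]

lemma integrable_exp_neg_half_sq_gaussianReal :
    Integrable (fun x : ℝ => Real.exp (-(1 / 2) * x ^ 2)) (gaussianReal 0 1) := by
  refine Integrable.of_bound (C := 1) (by fun_prop) (ae_of_all _ fun x => ?_)
  rw [Real.norm_eq_abs, Real.abs_exp, Real.exp_le_one_iff]
  nlinarith [sq_nonneg x]

/-- Chernoff's bound for the lower tail of the chi-square distribution with `d` degrees of
freedom. -/
lemma stdGaussian_small_norm_le (d : ℕ) :
    (stdGaussian d).real {x | ∑ j, x j ^ 2 ≤ (d : ℝ) / 2} ≤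
      Real.exp (-(Real.log 2 / 2 - 1 / 4) * d) := by
  have hexp : ∀ x : Fin d → ℝ, Real.exp (-(1 / 2) * ∑ j, x j ^ 2)
      = ∏ j, Real.exp (-(1 / 2) * x j ^ 2) := by
    intro x
    rw [Finset.mul_sum, Real.exp_sum]
  have hint : Integrable (fun x : Fin d → ℝ => Real.exp (-(1 / 2) * ∑ j, x j ^ 2))
      (stdGaussian d) := by
    simp_rw [hexp]
    exact Integrable.fintype_prod fun _ => integrable_exp_neg_half_sq_gaussianReal
  have hmgf : mgf (fun x : Fin d → ℝ => ∑ j, x j ^ 2) (stdGaussian d) (-(1 / 2))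
      = Real.exp (-(Real.log 2 / 2)) ^ d := by
    simp only [mgf, hexp, _root_.stdGaussian]
    rw [integral_fintype_prod_eq_prod (fun _ (y : ℝ) => Real.exp (-(1 / 2) * y ^ 2))]
    simp only [integral_exp_neg_half_sq_gaussianReal, Finset.prod_const, Finset.card_univ,
      Fintype.card_fin]
  refine (measure_le_le_exp_mul_mgf _ (by norm_num) hint).trans_eq ?_
  rw [hmgf, ← Real.exp_nat_mul, ← Real.exp_add]
  ring_nf

/-- Unit vectors have coordinates in `[-1, 1]`, so the empirical moments are bounded on the sphere;
without this the real `sSup` would take its default value `0`. -/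
lemma bddAbove_empirical_moment {p : ℝ} (hp : 0 < p) {d N : ℕ} (x : Fin N → Fin d → ℝ) :
    BddAbove ((fun z : Fin d → ℝ =>
      (1 / N : ℝ) * ∑ i, |∑ j, x i j * z j| ^ p) '' {z | eucNorm z = 1}) := by
  refine ⟨(1 / N : ℝ) * ∑ i, (∑ j, |x i j|) ^ p, ?_⟩
  rintro _ ⟨z, hz, rfl⟩
  have hz2 : ∑ j, z j ^ 2 = 1 := Real.sqrt_eq_one.mp hz
  have hz1 : ∀ j, |z j| ≤ 1 := by
    intro j
    have := Finset.single_le_sum (fun k _ => sq_nonneg (z k)) (Finset.mem_univ j)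
    rw [← sq_le_one_iff_abs_le_one]
    linarith
  dsimp only
  gcongr with i
  refine (Finset.abs_sum_le_sum_abs _ _).trans (Finset.sum_le_sum fun j _ => ?_)
  rw [abs_mul]
  exact mul_le_of_le_one_right (abs_nonneg _) (hz1 j)

/-- The deterministic part of the argument: one long sample vector forces a large supremum. -/
lemma le_sSup_of_norm_sq {p : ℝ} (hp : 0 < p) {d N : ℕ} (hd : 0 < d) (x : Fin N → Fin d → ℝ)
    (i₀ : Fin N) (hx : (d : ℝ) / 2 ≤ ∑ j, x i₀ j ^ 2) :
    (d : ℝ) ^ (p / 2) / (2 ^ (p / 2) * N) ≤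
      sSup ((fun z : Fin d → ℝ =>
        (1 / N : ℝ) * ∑ i, |∑ j, x i j * z j| ^ p) '' {z | eucNorm z = 1}) := by
  set s : ℝ := ∑ j, x i₀ j ^ 2 with hs
  have hs0 : 0 < s := lt_of_lt_of_le (by positivity) hx
  have hr0 : 0 < √s := Real.sqrt_pos.mpr hs0
  have hrr : √s * √s = s := Real.mul_self_sqrt hs0.le
  have hz : eucNorm (fun j => x i₀ j / √s) = 1 := by
    unfold eucNorm
    simp_rw [div_pow]
    rw [← Finset.sum_div, Real.sq_sqrt hs0.le, ← hs, div_self hs0.ne', Real.sqrt_one]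
  have hinner : ∑ j, x i₀ j * (x i₀ j / √s) = √s := by
    have : ∀ j, x i₀ j * (x i₀ j / √s) = x i₀ j ^ 2 / √s := fun j => by ring
    simp_rw [this]
    rw [← Finset.sum_div, ← hs, div_eq_iff hr0.ne', hrr]
  refine le_trans ?_ (le_csSup (bddAbove_empirical_moment hp x) ⟨_, hz, rfl⟩)
  have hsingle : √s ^ p ≤ ∑ i, |∑ j, x i j * (x i₀ j / √s)| ^ p := by
    have := Finset.single_le_sum (f := fun i => |∑ j, x i j * (x i₀ j / √s)| ^ p)
      (fun i _ => by positivity) (Finset.mem_univ i₀)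
    simpa only [hinner, abs_of_pos hr0] using this
  have hpow : (d : ℝ) ^ (p / 2) / 2 ^ (p / 2) ≤ √s ^ p := by
    rw [← Real.div_rpow (by positivity) (by norm_num), Real.sqrt_eq_rpow, ← Real.rpow_mul hs0.le,
      show 1 / 2 * p = p / 2 by ring]
    gcongr
  calc (d : ℝ) ^ (p / 2) / (2 ^ (p / 2) * N)
      = (1 / N : ℝ) * ((d : ℝ) ^ (p / 2) / 2 ^ (p / 2)) := by
        rw [div_mul_eq_div_div]; ring
    _ ≤ _ := by
        exact mul_le_mul_of_nonneg_left (hpow.trans hsingle) (by positivity)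

/-- for `p ∈ (2,3)` and i.i.d. standard gaussian vectors `X₁,…,X_N` in `ℝ^d`,
with probability at least `1 − exp(−c d)`,
`sup_{z ∈ S^{d−1}} (1/N) Σᵢ |⟨Xᵢ,z⟩|^p ≥ d^{p/2}/(2^{p/2} N)`;
hence the empirical `p`-th moment admits no subgaussian uniform error bound on the sphere. -/
theorem empirical_p_moment_lower_bound :
    ∃ c : ℝ, 0 < c ∧
      ∀ (p : ℝ), 2 < p → p < 3 → ∀ (d N : ℕ),
        ENNReal.ofReal (1 - Real.exp (-c * d)) ≤
          (Measure.pi fun _ : Fin N => stdGaussian d)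
            {x | (d : ℝ) ^ (p / 2) / (2 ^ (p / 2) * N) ≤
              sSup ((fun z : Fin d → ℝ =>
                (1 / N : ℝ) * ∑ i, |∑ j, x i j * z j| ^ p) '' {z | eucNorm z = 1})} := by
  refine ⟨Real.log 2 / 2 - 1 / 4, by linarith [Real.log_two_gt_d9], ?_⟩
  intro p hp _ d N
  rcases Nat.eq_zero_or_pos d with rfl | hd
  · simp
  rcases Nat.eq_zero_or_pos N with rfl | hN
  · -- With no samples both sides of the inequality are `0`, so the event is everything.
    have hall : {x : Fin 0 → Fin d → ℝ | (d : ℝ) ^ (p / 2) / (2 ^ (p / 2) * (0 : ℕ)) ≤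
        sSup ((fun z : Fin d → ℝ =>
          (1 / (0 : ℕ) : ℝ) * ∑ i, |∑ j, x i j * z j| ^ p) '' {z | eucNorm z = 1})}
        = Set.univ := by
      refine Set.eq_univ_of_forall fun x => ?_
      rw [Set.mem_ofPred_eq, Nat.cast_zero, mul_zero, div_zero]
      refine Real.sSup_nonneg ?_
      rintro _ ⟨z, -, rfl⟩
      simp
    rw [hall, measure_univ]
    refine ENNReal.ofReal_le_one.mpr ?_
    linarith [Real.exp_pos (-(Real.log 2 / 2 - 1 / 4) * d)]
  let B : Set (Fin d → ℝ) := {x | ∑ j, x j ^ 2 ≤ (d : ℝ) / 2}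
  have hB : MeasurableSet B := measurableSet_le (by fun_prop) measurable_const
  let i₀ : Fin N := ⟨0, hN⟩
  calc ENNReal.ofReal (1 - Real.exp (-(Real.log 2 / 2 - 1 / 4) * d))
      ≤ ENNReal.ofReal ((stdGaussian d).real Bᶜ) := by
        rw [probReal_compl_eq_one_sub hB]
        exact ENNReal.ofReal_le_ofReal (sub_le_sub_left (stdGaussian_small_norm_le d) 1)
    _ = (stdGaussian d) Bᶜ := ofReal_measureReal
    _ = (Measure.pi fun _ : Fin N => stdGaussian d) (Function.eval i₀ ⁻¹' Bᶜ) :=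
        ((measurePreserving_eval (fun _ : Fin N => stdGaussian d) i₀).measure_preimage
          hB.compl.nullMeasurableSet).symm
    _ ≤ _ := by
        refine measure_mono fun x hx => ?_
        have hx' : ¬ ∑ j, x i₀ j ^ 2 ≤ (d : ℝ) / 2 := hx
        exact le_sSup_of_norm_sq (by linarith) hd x i₀ (not_le.mp hx').le
end
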